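/- arXiv:math/0512456 — 7 statements merged into one kernel-verified Lean document; each statement's English description precedes it below -/
import Mathlib

section
/- Let I ⊆ A = K[x_1,…,x_n] be a nonzero monomial ideal with ext(I) = {a_1,…,a_r}, and set J = (x^{a_1},…,x^{a_r}). Then (i) J is a reduction ideal of I, i.e. there exists m ≥ 1 with J·I^{m−1} = I^m, and (ii) every monomial reduction ideal L of I contains J. Consequently J is the unique minimal monomial reduction ideal of I. -/
open MvPolynomial Pointwise

attribute [local instance] Classical.propDecidable

noncomputable section

/-- The real exponent vector of a monomial exponent `a : Fin n →₀ ℕ`. -/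
def expVec {n : ℕ} (a : Fin n →₀ ℕ) : Fin n → ℝ := fun i => (a i : ℝ)

/-- The standard inner product on `ℝ^n`. -/
def dotR {n : ℕ} (u v : Fin n → ℝ) : ℝ := ∑ i, u i * v i

/-- A monomial ideal: an ideal generated by a set of monomials. -/
def IsMonomialIdeal {K : Type*} [Field K] {n : ℕ} (I : Ideal (MvPolynomial (Fin n) K)) : Prop :=
  ∃ S : Set (Fin n →₀ ℕ), I = Ideal.span ((fun a => (monomial a (1 : K))) '' S)

/-- The Newton polyhedron of an ideal: the convex hull of the exponent vectors of the
monomials belonging to the ideal. -/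
def newtonPolyhedron {K : Type*} [Field K] {n : ℕ} (I : Ideal (MvPolynomial (Fin n) K)) :
    Set (Fin n → ℝ) :=
  convexHull ℝ {v | ∃ a : Fin n →₀ ℕ, monomial a (1 : K) ∈ I ∧ v = expVec a}

/-- The hyperplane `{v : ⟨u,v⟩ = c}` is a supporting hyperplane of `C`:
`C ⊆ {v : ⟨u,v⟩ ≥ c}` and the hyperplane meets `C`. -/
def IsSupp {n : ℕ} (C : Set (Fin n → ℝ)) (u : Fin n → ℝ) (c : ℝ) : Prop :=
  (∀ v ∈ C, c ≤ dotR u v) ∧ ∃ v ∈ C, dotR u v = c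

/-- `F` is a proper face of `C`: `F = S ∩ C` for some supporting hyperplane `S`, `F ≠ C`. -/
def IsProperFace {n : ℕ} (C F : Set (Fin n → ℝ)) : Prop :=
  ∃ u c, u ≠ 0 ∧ IsSupp C u c ∧ F = {v ∈ C | dotR u v = c} ∧ F ≠ C

/-- A compact face is a proper face that is compact. -/
def IsCompactFace {n : ℕ} (C F : Set (Fin n → ℝ)) : Prop :=
  IsProperFace C F ∧ IsCompact F

/-- A maximal compact face: a compact face maximal under inclusion. -/
def IsMaxCompactFace {n : ℕ} (C F : Set (Fin n → ℝ)) : Prop :=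
  IsCompactFace C F ∧ ∀ G, IsCompactFace C G → F ⊆ G → F = G

/-- The graded maximal ideal `(x_1, …, x_n)` of `K[x_1, …, x_n]`. -/
def maxIdeal (K : Type*) [Field K] (n : ℕ) : Ideal (MvPolynomial (Fin n) K) :=
  Ideal.span (Set.range fun i => (X i : MvPolynomial (Fin n) K))

/-- `f` is a minimal generator of the monomial ideal `L` if `f ∈ L` and `f ∉ (x_1,…,x_n)·L`. -/
def IsMinGen {K : Type*} [Field K] {n : ℕ} (L : Ideal (MvPolynomial (Fin n) K))
    (f : MvPolynomial (Fin n) K) : Prop :=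
  f ∈ L ∧ f ∉ maxIdeal K n * L

/-- `L` is a reduction ideal of `I`: `L ⊆ I` and `L·I^{m-1} = I^m` for some `m ≥ 1`. -/
def IsReduction {K : Type*} [Field K] {n : ℕ} (L I : Ideal (MvPolynomial (Fin n) K)) : Prop :=
  L ≤ I ∧ ∃ m : ℕ, 1 ≤ m ∧ L * I ^ (m - 1) = I ^ m

/-- `v` dominates some convex combination of the points of `S`. -/
def QQ {n : ℕ} (S : Finset (Fin n →₀ ℕ)) (v : Fin n → ℝ) : Prop :=
  ∃ l : (Fin n →₀ ℕ) → ℝ, (∀ s, 0 ≤ l s) ∧ ∑ s ∈ S, l s = 1 ∧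
    ∀ i, ∑ s ∈ S, l s * (s i : ℝ) ≤ v i

lemma QQ_of_le {n : ℕ} {S : Finset (Fin n →₀ ℕ)} {s a : Fin n →₀ ℕ} (hs : s ∈ S) (h : s ≤ a) :
    QQ S (expVec a) := by
  refine ⟨fun t => if t = s then 1 else 0, fun t => by dsimp only; split_ifs <;> simp, by simp [hs], ?_⟩
  intro i
  simp only [ite_mul, one_mul, zero_mul, Finset.sum_ite_eq', hs, if_true, expVec]
  exact_mod_cast h i

lemma QQ_trans {n : ℕ} {S S' : Finset (Fin n →₀ ℕ)} {v : Fin n → ℝ} (h : QQ S v)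
    (h' : ∀ s ∈ S, QQ S' (expVec s)) : QQ S' v := by
  obtain ⟨l, l0, l1, lv⟩ := h
  have : ∀ s, ∃ m : (Fin n →₀ ℕ) → ℝ, s ∈ S → (∀ t, 0 ≤ m t) ∧ ∑ t ∈ S', m t = 1 ∧
    ∀ i, ∑ t ∈ S', m t * (t i : ℝ) ≤ expVec s i := by
    intro s
    by_cases hs : s ∈ S
    · obtain ⟨m, hm⟩ := h' s hs
      exact ⟨m, fun _ => hm⟩
    · exact ⟨0, fun h => absurd h hs⟩
  choose m hm using this
  refine ⟨fun t => ∑ s ∈ S, l s * m s t, ?_, ?_, ?_⟩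
  · intro t
    exact Finset.sum_nonneg fun s hs => mul_nonneg (l0 s) ((hm s hs).1 t)
  · rw [Finset.sum_comm, ← l1]
    refine Finset.sum_congr rfl fun s hs => ?_
    rw [← Finset.mul_sum, (hm s hs).2.1, mul_one]
  · intro i
    refine le_trans ?_ (lv i)
    simp_rw [Finset.sum_mul]
    rw [Finset.sum_comm]
    refine Finset.sum_le_sum fun s hs => ?_
    simp_rw [mul_assoc]
    rw [← Finset.mul_sum]
    exact mul_le_mul_of_nonneg_left ((hm s hs).2.2 i) (l0 s)

lemma QQ_convex {n : ℕ} (S : Finset (Fin n →₀ ℕ)) : Convex ℝ {v | QQ S v} := by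
  rintro x ⟨l, l0, l1, lv⟩ y ⟨m, m0, m1, mv⟩ a b ha hb hab
  refine ⟨fun t => a * l t + b * m t, fun t => ?_, ?_, fun i => ?_⟩
  · exact add_nonneg (mul_nonneg ha (l0 t)) (mul_nonneg hb (m0 t))
  · rw [Finset.sum_add_distrib, ← Finset.mul_sum, ← Finset.mul_sum, l1, m1]; simpa using hab
  · simp_rw [add_mul, mul_assoc]
    rw [Finset.sum_add_distrib, ← Finset.mul_sum, ← Finset.mul_sum]
    exact add_le_add (mul_le_mul_of_nonneg_left (lv i) ha) (mul_le_mul_of_nonneg_left (mv i) hb)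

/-- Removing a redundant point. -/
lemma QQ_erase {n : ℕ} {S : Finset (Fin n →₀ ℕ)} {b : Fin n →₀ ℕ} (hb : b ∈ S)
    {l : (Fin n →₀ ℕ) → ℝ} (l0 : ∀ s, 0 ≤ l s) (l1 : ∑ s ∈ S, l s = 1)
    (lv : ∀ i, ∑ s ∈ S, l s * (s i : ℝ) ≤ expVec b i) (hlt : l b < 1) :
    QQ (S.erase b) (expVec b) := by
  have hpos : 0 < 1 - l b := by linarith
  refine ⟨fun s => l s / (1 - l b), fun s => div_nonneg (l0 s) hpos.le, ?_, fun i => ?_⟩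
  · rw [← Finset.sum_div, div_eq_one_iff_eq hpos.ne']
    rw [← Finset.add_sum_erase S l hb] at l1
    linarith
  · have := lv i
    rw [← Finset.add_sum_erase S _ hb] at this
    simp_rw [div_mul_eq_mul_div]
    rw [← Finset.sum_div, div_le_iff₀ hpos]
    simp only [expVec] at this ⊢
    linarith

lemma extreme_of_min {n : ℕ} {S : Finset (Fin n →₀ ℕ)} {G : Set (Fin n →₀ ℕ)}
    {N : Set (Fin n → ℝ)}
    (hN : ∀ v ∈ N, QQ S v) (hGN : ∀ g ∈ G, expVec g ∈ N) (hSG : ∀ s ∈ S, s ∈ G)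
    (hmin : ∀ b ∈ S, ¬ ∀ g ∈ G, QQ (S.erase b) (expVec g)) {b : Fin n →₀ ℕ} (hb : b ∈ S) :
    expVec b ∈ Set.extremePoints ℝ N := by
  refine ⟨hGN b (hSG b hb), ?_⟩
  rintro x hx y hy ⟨t, u, ht, hu, htu, hxy⟩
  obtain ⟨l, l0, l1, lv⟩ := hN x hx
  obtain ⟨m, m0, m1, mv⟩ := hN y hy
  have hbi : ∀ i, t * x i + u * y i = b i := fun i => by
    have := congrFun hxy i
    simpa [expVec] using this
  by_cases hlt : t * l b + u * m b < 1
  · exfalso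
    apply hmin b hb
    have key : QQ (S.erase b) (expVec b) := by
      refine QQ_erase hb (l := fun s => t * l s + u * m s) ?_ ?_ ?_ hlt
      · intro s
        exact add_nonneg (mul_nonneg ht.le (l0 s)) (mul_nonneg hu.le (m0 s))
      · rw [Finset.sum_add_distrib, ← Finset.mul_sum, ← Finset.mul_sum, l1, m1]; simpa using htu
      · intro i
        simp_rw [add_mul, mul_assoc]
        rw [Finset.sum_add_distrib, ← Finset.mul_sum, ← Finset.mul_sum]
        simp only [expVec]
        rw [← hbi i]
        exact add_le_add (mul_le_mul_of_nonneg_left (lv i) ht.le)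
          (mul_le_mul_of_nonneg_left (mv i) hu.le)
    intro g hg
    refine QQ_trans (hN _ (hGN g hg)) fun s hs => ?_
    by_cases hsb : s = b
    · rw [hsb]; exact key
    · exact QQ_of_le (Finset.mem_erase.2 ⟨hsb, hs⟩) le_rfl
  · have hl : l b ≤ 1 := by
      rw [← l1]; exact Finset.single_le_sum (fun s _ => l0 s) hb
    have hm : m b ≤ 1 := by
      rw [← m1]; exact Finset.single_le_sum (fun s _ => m0 s) hb
    have hl' : l b = 1 := by nlinarith
    have hm' : m b = 1 := by nlinarith
    have aux : ∀ (f : (Fin n →₀ ℕ) → ℝ) (z : Fin n → ℝ), (∀ s, 0 ≤ f s) → f b = 1 →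
        (∀ i, ∑ s ∈ S, f s * (s i : ℝ) ≤ z i) → ∀ i, (b i : ℝ) ≤ z i := by
      intro f z f0 fb fz i
      refine le_trans ?_ (fz i)
      have := Finset.single_le_sum (f := fun s => f s * (s i : ℝ))
        (fun s _ => mul_nonneg (f0 s) (Nat.cast_nonneg _)) hb
      simpa [fb] using this
    have hX := aux l x l0 hl' lv
    have hY := aux m y m0 hm' mv
    funext i
    have h1 := hbi i
    have h2 := hX i
    have h3 := hY i
    simp only [expVec]
    have hu' : u = 1 - t := by linarith
    subst hu'
    nlinarith

lemma exists_min_QQ {n : ℕ} {T : Finset (Fin n →₀ ℕ)} {G : Set (Fin n →₀ ℕ)}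
    (hTG : ∀ s ∈ T, s ∈ G) (hT : ∀ g ∈ G, QQ T (expVec g)) :
    ∃ S : Finset (Fin n →₀ ℕ), (∀ s ∈ S, s ∈ G) ∧ (∀ g ∈ G, QQ S (expVec g)) ∧
      (∀ b ∈ S, ¬ ∀ g ∈ G, QQ (S.erase b) (expVec g)) := by
  induction T using Finset.strongInduction with
  | H T ih =>
    by_cases h : ∀ b ∈ T, ¬ ∀ g ∈ G, QQ (T.erase b) (expVec g)
    · exact ⟨T, hTG, hT, h⟩
    · push Not at h
      obtain ⟨b, hb, hg⟩ := h
      exact ih _ (Finset.erase_ssubset hb) (fun s hs => hTG s (Finset.mem_of_mem_erase hs)) hg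

/-- Natural number coefficients via Dickson's lemma. -/
lemma exists_nat {n : ℕ} {S : Finset (Fin n →₀ ℕ)} {b : Fin n →₀ ℕ} (h : QQ S (expVec b)) :
    ∃ k : ℕ, ∃ c : (Fin n →₀ ℕ) → ℕ, k + 1 ≤ ∑ s ∈ S, c s ∧
      ∑ s ∈ S, c s • s ≤ (k + 1) • b := by
  obtain ⟨l, l0, l1, lv⟩ := h
  let c : ℕ → (Fin n →₀ ℕ) → ℕ := fun k s => ⌊(k : ℝ) * l s⌋₊
  have hc1 : ∀ k s, (c k s : ℝ) ≤ k * l s := fun k s =>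
    Nat.floor_le (mul_nonneg (Nat.cast_nonneg _) (l0 s))
  have hc2 : ∀ (k : ℕ) s, (k : ℝ) * l s ≤ c k s + 1 := fun k s => (Nat.lt_floor_add_one _).le
  have hA : ∀ k, ∑ s ∈ S, c k s • s ≤ k • b := by
    intro k i
    have h1 : ((∑ s ∈ S, c k s * s i : ℕ) : ℝ) ≤ ((k * b i : ℕ) : ℝ) := by
      push_cast
      calc ∑ s ∈ S, (c k s : ℝ) * (s i : ℝ) ≤ ∑ s ∈ S, (k : ℝ) * (l s * (s i : ℝ)) := by
            refine Finset.sum_le_sum fun s _ => ?_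
            rw [← mul_assoc]
            exact mul_le_mul_of_nonneg_right (hc1 k s) (Nat.cast_nonneg _)
        _ ≤ k * b i := by
            rw [← Finset.mul_sum]
            exact mul_le_mul_of_nonneg_left (lv i) (Nat.cast_nonneg _)
    have h2 : ∑ s ∈ S, c k s * s i ≤ k * b i := by exact_mod_cast h1
    simpa [Finsupp.finsetSum_apply] using h2
  have hB : ∀ k, k ≤ ∑ s ∈ S, c k s + S.card := by
    intro k
    have : (k : ℝ) ≤ ((∑ s ∈ S, c k s + S.card : ℕ) : ℝ) := by
      push_cast
      calc (k : ℝ) = ∑ s ∈ S, (k : ℝ) * l s := by rw [← Finset.mul_sum, l1, mul_one]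
        _ ≤ ∑ s ∈ S, ((c k s : ℝ) + 1) := Finset.sum_le_sum fun s _ => hc2 k s
        _ = _ := by rw [Finset.sum_add_distrib]; simp
    exact_mod_cast this
  obtain ⟨p, q, hpq, hle⟩ := wellQuasiOrdered_le (α := (Fin n →₀ ℕ) × ℕ)
    (fun k => (k • b - ∑ s ∈ S, c k s • s, ∑ s ∈ S, c k s + S.card - k))
  have hle1 := hle.1
  have hle2 : ∑ s ∈ S, c p s + S.card - p ≤ ∑ s ∈ S, c q s + S.card - q := hle.2
  have hmono : ∀ s, c p s ≤ c q s := fun s =>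
    Nat.floor_mono (mul_le_mul_of_nonneg_right (by exact_mod_cast hpq.le) (l0 s))
  have hsum : ∑ s ∈ S, c q s = ∑ s ∈ S, (c q s - c p s) + ∑ s ∈ S, c p s := by
    rw [← Finset.sum_add_distrib]
    exact Finset.sum_congr rfl fun s _ => (Nat.sub_add_cancel (hmono s)).symm
  obtain ⟨d, rfl⟩ := Nat.exists_eq_add_of_lt hpq
  refine ⟨d, fun s => c (p + d + 1) s - c p s, ?_, ?_⟩
  · show d + 1 ≤ ∑ s ∈ S, (c (p + d + 1) s - c p s)
    have := hB p
    have := hB (p + d + 1)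
    omega
  · intro i
    have e1 := hle1 i
    have a1 := hA p i
    have a2 := hA (p + d + 1) i
    have hs2 : ∑ s ∈ S, c (p + d + 1) s * s i =
        ∑ s ∈ S, (c (p + d + 1) s - c p s) * s i + ∑ s ∈ S, c p s * s i := by
      rw [← Finset.sum_add_distrib]
      refine Finset.sum_congr rfl fun s _ => ?_
      rw [← add_mul, Nat.sub_add_cancel (hmono s)]
    simp only [Finsupp.tsub_apply, Finsupp.finsetSum_apply, Finsupp.smul_apply, smul_eq_mul]
      at e1 a1 a2 ⊢
    have e : (p + d + 1) * b i = p * b i + (d + 1) * b i := by ring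
    omega

lemma monomial_pow_mem {K : Type*} [Field K] {n : ℕ} {J : Ideal (MvPolynomial (Fin n) K)}
    {S : Finset (Fin n →₀ ℕ)} {b : Fin n →₀ ℕ} (hS : ∀ s ∈ S, monomial s (1 : K) ∈ J)
    (h : QQ S (expVec b)) : ∃ k : ℕ, (monomial b (1 : K)) ^ (k + 1) ∈ J ^ (k + 1) := by
  obtain ⟨k, c, hk, hc⟩ := exists_nat h
  refine ⟨k, ?_⟩
  obtain ⟨d, hd⟩ := exists_add_of_le hc
  have h1 : ∏ s ∈ S, (monomial s (1 : K)) ^ c s ∈ J ^ (∑ s ∈ S, c s) := by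
    rw [← Finset.prod_pow_eq_pow_sum]
    exact Ideal.prod_mem_prod fun s hs => Ideal.pow_mem_pow (hS s hs) _
  have h2 : (monomial b (1 : K)) ^ (k + 1) =
      (∏ s ∈ S, (monomial s (1 : K)) ^ c s) * monomial d 1 := by
    simp_rw [monomial_pow, one_pow]
    rw [hd, ← monomial_sum_one, monomial_mul, one_mul]
  rw [h2]
  exact Ideal.mul_mem_right _ _ (Ideal.pow_le_pow_right hk h1)

lemma reduction_of_pow {R : Type*} [CommRing R] {J I : Ideal R} (hJI : J ≤ I) (T : Finset R)
    (hT : I = Ideal.span (T : Set R)) (h : ∀ t ∈ T, ∃ k : ℕ, t ^ (k + 1) ∈ J ^ (k + 1)) :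
    ∃ m : ℕ, 1 ≤ m ∧ J * I ^ (m - 1) = I ^ m := by
  choose! k hk using h
  let N := T.sup k
  refine ⟨T.card * N + 1, by omega, ?_⟩
  rw [Nat.add_sub_cancel]
  apply le_antisymm
  · rw [pow_succ']
    exact Ideal.mul_mono_left hJI
  · have hTI : ∀ t ∈ T, t ∈ I := fun t ht => by rw [hT]; exact Ideal.subset_span ht
    have e : I ^ (T.card * N + 1) = Ideal.span ((T : Set R) ^ (T.card * N + 1)) := by
      rw [hT]; exact Submodule.span_pow _ _
    rw [e, Ideal.span_le]
    intro x hx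
    rw [Set.mem_pow_iff_prod] at hx
    obtain ⟨f, hf, rfl⟩ := hx
    obtain ⟨t, ht, hcard⟩ := Finset.exists_lt_card_fiber_of_mul_lt_card_of_maps_to
      (s := Finset.univ) (t := T) (f := f) (n := N) (fun i _ => hf i) (by simp)
    rw [← Finset.prod_filter_mul_prod_filter_not Finset.univ (fun i => f i = t)]
    have hcc := Finset.card_filter_add_card_filter_not (s := Finset.univ) (fun i => f i = t)
    rw [Finset.card_univ, Fintype.card_fin] at hcc
    set F := Finset.univ.filter (fun i => f i = t) with hF
    set F' := Finset.univ.filter (fun i => ¬ f i = t) with hF'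
    have h1 : ∏ i ∈ F, f i = t ^ F.card := by
      apply Finset.prod_eq_pow_card
      intro i hi
      exact (Finset.mem_filter.1 hi).2
    have h2 : ∏ i ∈ F', f i ∈ I ^ F'.card := by
      rw [← Finset.prod_const]
      exact Ideal.prod_mem_prod fun i _ => hTI _ (hf i)
    have hkN : k t ≤ N := Finset.le_sup ht
    obtain ⟨r, hr⟩ := Nat.exists_eq_add_of_le (show k t + 1 ≤ F.card by omega)
    have h3 : t ^ F.card ∈ J * I ^ (k t + r) := by
      rw [hr, pow_add, pow_add, ← mul_assoc]
      refine Ideal.mul_mem_mul ?_ (Ideal.pow_mem_pow (hTI t ht) _)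
      have := hk t ht
      rw [pow_succ'] at this
      rw [pow_succ'] at this ⊢
      exact Ideal.mul_mono_right (Ideal.pow_right_mono hJI _) this
    rw [h1]
    have h4 := Ideal.mul_mem_mul h3 h2
    rw [mul_assoc, ← pow_add] at h4
    have : k t + r + F'.card = T.card * N := by omega
    rw [this] at h4
    exact h4

lemma mono_mem_span {K : Type*} [Field K] {n : ℕ} {S : Set (Fin n →₀ ℕ)} {a : Fin n →₀ ℕ} :
    monomial a (1 : K) ∈ Ideal.span ((fun a => (monomial a (1 : K))) '' S) ↔ ∃ s ∈ S, s ≤ a := by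
  rw [mem_ideal_span_monomial_image]
  simp [support_monomial]

lemma mono_mem_of_le {K : Type*} [Field K] {n : ℕ} {I : Ideal (MvPolynomial (Fin n) K)}
    {a b : Fin n →₀ ℕ} (h : monomial a (1 : K) ∈ I) (hab : a ≤ b) : monomial b (1 : K) ∈ I := by
  obtain ⟨d, rfl⟩ := exists_add_of_le hab
  have : monomial (a + d) (1 : K) = monomial a 1 * monomial d 1 := by
    rw [monomial_mul, one_mul]
  rw [this]
  exact Ideal.mul_mem_right _ _ h

lemma image_mul_image {K : Type*} [Field K] {n : ℕ} (S T : Set (Fin n →₀ ℕ)) :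
    ((fun a => (monomial a (1 : K))) '' S) * ((fun a => (monomial a (1 : K))) '' T) =
      (fun a => (monomial a (1 : K))) '' (S + T) := by
  ext x
  simp only [Set.mem_mul, Set.mem_image, Set.mem_add]
  constructor
  · rintro ⟨_, ⟨a, ha, rfl⟩, _, ⟨b, hb, rfl⟩, rfl⟩
    exact ⟨a + b, ⟨a, ha, b, hb, rfl⟩, by rw [monomial_mul, one_mul]⟩
  · rintro ⟨_, ⟨a, ha, b, hb, rfl⟩, rfl⟩
    exact ⟨_, ⟨a, ha, rfl⟩, _, ⟨b, hb, rfl⟩, by rw [monomial_mul, one_mul]⟩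

lemma isMono_mul {K : Type*} [Field K] {n : ℕ} {L I : Ideal (MvPolynomial (Fin n) K)}
    (hL : IsMonomialIdeal L) (hI : IsMonomialIdeal I) : IsMonomialIdeal (L * I) := by
  obtain ⟨S, rfl⟩ := hL
  obtain ⟨T, rfl⟩ := hI
  exact ⟨S + T, by rw [Ideal.span_mul_span', image_mul_image]⟩

lemma isMono_pow {K : Type*} [Field K] {n : ℕ} {I : Ideal (MvPolynomial (Fin n) K)}
    (hI : IsMonomialIdeal I) (k : ℕ) : IsMonomialIdeal (I ^ (k + 1)) := by
  induction k with
  | zero => simpa using hI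
  | succ k ih => rw [pow_succ]; exact isMono_mul ih hI

lemma mem_mul_split {K : Type*} [Field K] {n : ℕ} {L I : Ideal (MvPolynomial (Fin n) K)}
    (hL : IsMonomialIdeal L) (hI : IsMonomialIdeal I) {c : Fin n →₀ ℕ}
    (hc : monomial c (1 : K) ∈ L * I) :
    ∃ p q, monomial p (1 : K) ∈ L ∧ monomial q (1 : K) ∈ I ∧ c = p + q := by
  obtain ⟨S, rfl⟩ := hL
  obtain ⟨T, rfl⟩ := hI
  rw [Ideal.span_mul_span', image_mul_image, mono_mem_span] at hc
  obtain ⟨_, ⟨s, hs, t, ht, rfl⟩, hle⟩ := hc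
  obtain ⟨d, rfl⟩ := exists_add_of_le hle
  exact ⟨s, t + d, mono_mem_span.2 ⟨s, hs, le_rfl⟩, mono_mem_span.2 ⟨t, ht, by simp⟩,
    add_assoc _ _ _⟩

lemma expVec_add {n : ℕ} (a b : Fin n →₀ ℕ) : expVec (a + b) = expVec a + expVec b := by
  funext i; simp [expVec]

lemma expVec_inj {n : ℕ} {a b : Fin n →₀ ℕ} (h : expVec a = expVec b) : a = b := by
  ext i
  have := congrFun h i
  simpa [expVec] using this

lemma mem_newton {K : Type*} [Field K] {n : ℕ} {I : Ideal (MvPolynomial (Fin n) K)}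
    {a : Fin n →₀ ℕ} (h : monomial a (1 : K) ∈ I) : expVec a ∈ newtonPolyhedron I :=
  subset_convexHull ℝ _ ⟨a, h, rfl⟩

lemma pow_mem_newton {K : Type*} [Field K] {n : ℕ} {I : Ideal (MvPolynomial (Fin n) K)}
    (hI : IsMonomialIdeal I) (k : ℕ) {a : Fin n →₀ ℕ} (h : monomial a (1 : K) ∈ I ^ (k + 1)) :
    ∃ v ∈ newtonPolyhedron I, expVec a = ((k : ℝ) + 1) • v := by
  induction k generalizing a with
  | zero => exact ⟨expVec a, mem_newton (by simpa using h), by simp⟩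
  | succ k ih =>
    rw [pow_succ] at h
    obtain ⟨p, q, hp, hq, rfl⟩ := mem_mul_split (isMono_pow hI k) hI h
    obtain ⟨v, hv, hpv⟩ := ih hp
    have hk : (0 : ℝ) < (k : ℝ) + 1 := by positivity
    have hk2 : (0 : ℝ) < (k : ℝ) + 1 + 1 := by positivity
    refine ⟨(((k : ℝ) + 1) / (k + 1 + 1)) • v + (1 / ((k : ℝ) + 1 + 1)) • expVec q,
      (convex_convexHull ℝ _) hv (mem_newton hq) (by positivity) (by positivity)
        (by field_simp), ?_⟩
    rw [expVec_add, hpv]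
    funext i
    simp
    field_simp

lemma extreme_mem {K : Type*} [Field K] {n : ℕ} {I L : Ideal (MvPolynomial (Fin n) K)}
    (hI : IsMonomialIdeal I) (hL : IsMonomialIdeal L) (hLI : IsReduction L I) {a : Fin n →₀ ℕ}
    (ha : expVec a ∈ Set.extremePoints ℝ (newtonPolyhedron I)) :
    monomial a (1 : K) ∈ I ∧ monomial a (1 : K) ∈ L := by
  have haI : monomial a (1 : K) ∈ I := by
    obtain ⟨b, hb, he⟩ := extremePoints_convexHull_subset ha
    rw [expVec_inj he]; exact hb
  refine ⟨haI, ?_⟩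
  obtain ⟨hle, m, hm, hLm⟩ := hLI
  obtain ⟨m, rfl⟩ := Nat.exists_eq_add_of_le' hm
  rw [Nat.add_sub_cancel] at hLm
  cases m with
  | zero =>
    simp at hLm
    rwa [hLm]
  | succ k =>
    have h1 : monomial ((k + 1 + 1) • a) (1 : K) ∈ L * I ^ (k + 1) := by
      rw [hLm]
      have := Ideal.pow_mem_pow haI (k + 1 + 1)
      rwa [monomial_pow, one_pow] at this
    obtain ⟨p, q, hp, hq, hpq⟩ := mem_mul_split hL (isMono_pow hI k) h1
    obtain ⟨v, hv, hqv⟩ := pow_mem_newton hI k hq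
    have hk : (0 : ℝ) < (k : ℝ) + 1 := by positivity
    have hk2 : (0 : ℝ) < (k : ℝ) + 1 + 1 := by positivity
    have key := ha.2 (mem_newton (hle hp)) hv
      ⟨1 / ((k : ℝ) + 1 + 1), ((k : ℝ) + 1) / (k + 1 + 1), by positivity, by positivity,
        by field_simp; ring, by
          funext i
          have e1 := congrFun hqv i
          have e2 : (k + 1 + 1) * a i = p i + q i := by
            have := DFunLike.congr_fun hpq i
            simpa using this
          have e3 : ((k : ℝ) + 1 + 1) * a i = p i + q i := by exact_mod_cast e2
          simp only [expVec, Pi.smul_apply, smul_eq_mul] at e1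
          simp only [expVec, Pi.smul_apply, smul_eq_mul, Pi.add_apply]
          field_simp
          linarith⟩
    rw [← expVec_inj key]
    exact hp

/-- Dickson: a monomial ideal has a finite set of monomial generators. -/
lemma exists_finset_gen {K : Type*} [Field K] {n : ℕ} {I : Ideal (MvPolynomial (Fin n) K)}
    (hI : IsMonomialIdeal I) : ∃ T : Finset (Fin n →₀ ℕ),
      I = Ideal.span ((fun a => (monomial a (1 : K))) '' (T : Set (Fin n →₀ ℕ))) := by
  obtain ⟨S, rfl⟩ := hI
  have hfin : {a | Minimal (· ∈ S) a}.Finite :=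
    WellQuasiOrderedLE.finite_of_isAntichain (setOfPred_minimal_antichain _)
  refine ⟨hfin.toFinset, le_antisymm ?_ ?_⟩
  · rw [Ideal.span_le]
    rintro _ ⟨a, ha, rfl⟩
    obtain ⟨b, hba, hb⟩ := exists_minimal_le_of_wellFoundedLT (· ∈ S) a ha
    exact mono_mem_span.2 ⟨b, by simpa using hb, hba⟩
  · apply Ideal.span_mono
    apply Set.image_mono
    intro a ha
    have : Minimal (· ∈ S) a := by simpa using ha
    exact this.prop

theorem stmt2 {K : Type*} [Field K] {n : ℕ} (I J : Ideal (MvPolynomial (Fin n) K))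
    (hI : IsMonomialIdeal I) (hne : I ≠ ⊥)
    (hJ : J = Ideal.span {f | ∃ a : Fin n →₀ ℕ,
        expVec a ∈ Set.extremePoints ℝ (newtonPolyhedron I) ∧ f = monomial a (1 : K)}) :
    IsReduction J I ∧
      ∀ L : Ideal (MvPolynomial (Fin n) K),
        IsMonomialIdeal L → IsReduction L I → J ≤ L := by 
  have hI1 : IsReduction I I := ⟨le_rfl, 1, le_rfl, by simp⟩
  refine ⟨?_, ?_⟩
  · obtain ⟨T, hT⟩ := exists_finset_gen hI
    have hG : ∀ g, monomial g (1 : K) ∈ I → QQ T (expVec g) := by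
      intro g hg
      rw [hT, mono_mem_span] at hg
      obtain ⟨s, hs, hle⟩ := hg
      exact QQ_of_le hs hle
    obtain ⟨S, hSG, hSQ, hSmin⟩ := exists_min_QQ (T := T) (G := {g | monomial g (1 : K) ∈ I})
      (fun s hs => by
        show monomial s (1 : K) ∈ I
        rw [hT]; exact mono_mem_span.2 ⟨s, hs, le_rfl⟩) hG
    have hN : ∀ v ∈ newtonPolyhedron I, QQ S v := by
      intro v hv
      refine convexHull_min (t := {v | QQ S v}) ?_ (QQ_convex S) hv
      rintro _ ⟨a, ha, rfl⟩
      exact hSQ a ha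
    have hSJ : ∀ s ∈ S, monomial s (1 : K) ∈ J := by
      intro s hs
      rw [hJ]
      exact Ideal.subset_span
        ⟨s, extreme_of_min hN (fun g hg => mem_newton hg) hSG hSmin hs, rfl⟩
    have hJI : J ≤ I := by
      rw [hJ, Ideal.span_le]
      rintro _ ⟨a, ha, rfl⟩
      exact (extreme_mem hI hI hI1 ha).1
    refine ⟨hJI, reduction_of_pow hJI (T.image fun a => monomial a (1 : K)) ?_ ?_⟩
    · rw [Finset.coe_image]; exact hT
    · intro t ht
      obtain ⟨a, ha, rfl⟩ := Finset.mem_image.1 ht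
      refine monomial_pow_mem hSJ (hSQ a ?_)
      show monomial a (1 : K) ∈ I
      rw [hT]; exact mono_mem_span.2 ⟨a, ha, le_rfl⟩
  · intro L hL hLI
    rw [hJ, Ideal.span_le]
    rintro _ ⟨a, ha, rfl⟩
    exact (extreme_mem hI hL hLI ha).2
end
end

section
/- Let A = K[x_1,…,x_n] with graded maximal ideal m = (x_1,…,x_n), and let L and P be homogeneous ideals of A with I = L + P. If P^t ⊆ m·I^t for some integer t ≥ 1, then I^t = L·I^{t−1}; in particular, L is a reduction ideal of I. -/
open MvPolynomial Pointwise

attribute [local instance] Classical.propDecidable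

noncomputable section

/-- A homogeneous ideal: an ideal generated by homogeneous polynomials. -/
def IsHomogIdeal {K : Type*} [Field K] {n : ℕ} (I : Ideal (MvPolynomial (Fin n) K)) : Prop :=
  ∃ S : Set (MvPolynomial (Fin n) K), (∀ f ∈ S, ∃ d, f.IsHomogeneous d) ∧ I = Ideal.span S

attribute [local instance] MvPolynomial.gradedAlgebra

theorem IsHomogIdeal.isHomogeneous {K : Type*} [Field K] {n : ℕ}
    {I : Ideal (MvPolynomial (Fin n) K)} (h : IsHomogIdeal I) :
    I.IsHomogeneous (homogeneousSubmodule (Fin n) K) := by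
  obtain ⟨S, hS, rfl⟩ := h
  refine Ideal.homogeneous_span _ _ fun f hf => ?_
  obtain ⟨d, hd⟩ := hS f hf
  exact ⟨d, hd⟩

theorem homog_pow {K : Type*} [Field K] {n : ℕ}
    {I : Ideal (MvPolynomial (Fin n) K)}
    (h : I.IsHomogeneous (homogeneousSubmodule (Fin n) K)) (s : ℕ) :
    (I ^ s).IsHomogeneous (homogeneousSubmodule (Fin n) K) := by
  induction s with
  | zero =>
    rw [pow_zero, Ideal.one_eq_top]
    exact Ideal.IsHomogeneous.top _
  | succ k ih =>
    rw [pow_succ]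
    exact ih.mul h

theorem sup_pow_succ_le {R : Type*} [CommRing R] (L P : Ideal R) (s : ℕ) :
    (L ⊔ P) ^ (s + 1) ≤ L * (L ⊔ P) ^ s ⊔ P ^ (s + 1) := by
  induction s with
  | zero => simp
  | succ k ih =>
    rw [pow_succ (L ⊔ P) (k + 1)]
    conv_lhs => rw [Ideal.mul_sup]
    refine sup_le (le_sup_of_le_left (mul_comm _ _).le) ?_
    refine (Ideal.mul_mono_left ih).trans ?_
    rw [Ideal.sup_mul, ← pow_succ, mul_assoc]
    refine sup_le_sup_right (Ideal.mul_mono_right ?_) _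
    rw [pow_succ]
    exact Ideal.mul_mono_right le_sup_right

theorem le_sup_pow_mul {R : Type*} [CommRing R] {N J M : Ideal R} (h : N ≤ J ⊔ M * N) (k : ℕ) :
    N ≤ J ⊔ M ^ k * N := by
  induction k with
  | zero => simp
  | succ k ih =>
    refine ih.trans (sup_le le_sup_left ?_)
    refine (Ideal.mul_mono_right h).trans ?_
    rw [Ideal.mul_sup, ← mul_assoc, ← pow_succ]
    exact sup_le_sup_right Ideal.mul_le_right _

theorem graded_nakayama {K : Type*} [Field K] {n : ℕ} {N J : Ideal (MvPolynomial (Fin n) K)}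
    (hJ : J.IsHomogeneous (homogeneousSubmodule (Fin n) K))
    (h : N ≤ J ⊔ maxIdeal K n * N) : N ≤ J := by
  intro f hf
  have h1 := le_sup_pow_mul h (f.totalDegree + 1) hf
  obtain ⟨j, hj, r, hr, hjr⟩ := Submodule.mem_sup.1 h1
  have hr' : r ∈ idealOfVars (Fin n) K ^ (f.totalDegree + 1) := by
    have h2 : r ∈ maxIdeal K n ^ (f.totalDegree + 1) := Ideal.mul_le_left hr
    exact h2
  rw [mem_pow_idealOfVars_iff'] at hr'
  rw [← sum_homogeneousComponent f]
  refine Ideal.sum_mem _ fun i hi => ?_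
  have hi' := Finset.mem_range.1 hi
  have h0 : homogeneousComponent i r = 0 := by
    ext d
    rw [coeff_homogeneousComponent, coeff_zero]
    split_ifs with hd
    · exact hr' d (by omega)
    · rfl
  rw [← hjr, map_add, h0, add_zero]
  exact (mem_iff_homogeneousComponent_mem hJ j).1 hj i

theorem stmt4 {K : Type*} [Field K] {n : ℕ} (L P I : Ideal (MvPolynomial (Fin n) K))
    (hL : IsHomogIdeal L) (hP : IsHomogIdeal P) (hI : I = L ⊔ P)
    (t : ℕ) (ht : 1 ≤ t) (h : P ^ t ≤ maxIdeal K n * I ^ t) :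
    I ^ t = L * I ^ (t - 1) := by
  obtain ⟨s, rfl⟩ : ∃ s, t = s + 1 := ⟨t - 1, by omega⟩
  rw [Nat.add_sub_cancel]
  have hIh : I.IsHomogeneous (homogeneousSubmodule (Fin n) K) := by
    rw [hI]
    exact hL.isHomogeneous.sup hP.isHomogeneous
  apply le_antisymm
  · refine graded_nakayama (hL.isHomogeneous.mul (homog_pow hIh s)) ?_
    refine le_trans ?_ (sup_le_sup_left h _)
    rw [hI]
    exact sup_pow_succ_le L P s
  · rw [pow_succ']
    exact Ideal.mul_mono_left (hI ▸ le_sup_left)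
end
end

section
/- Let N ⊆ A = K[x_1,…,x_n] be a squarefree monomial ideal with minimal monomial generating set {x^{a_1},…,x^{a_s}} (so each a_i ∈ {0,1}^n). Then every a_i is an extreme point of conv(N); hence the exponent vectors of the minimal generators of N coincide with ext(N), i.e. every squarefree monomial ideal is an extremal ideal. -/
open MvPolynomial Pointwise

attribute [local instance] Classical.propDecidable

noncomputable section

lemma mono_mem_iff {K : Type*} [Field K] {n : ℕ} (S : Set (Fin n →₀ ℕ)) (a : Fin n →₀ ℕ) :
    monomial a (1 : K) ∈ Ideal.span ((fun a => monomial a (1 : K)) '' S) ↔ ∃ s ∈ S, s ≤ a := by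
  rw [mem_ideal_span_monomial_image]
  simp [support_monomial]

lemma not_minGen_iff {K : Type*} [Field K] {n : ℕ} (S : Set (Fin n →₀ ℕ)) (a : Fin n →₀ ℕ) :
    monomial a (1 : K) ∈ maxIdeal K n * Ideal.span ((fun a => monomial a (1 : K)) '' S) ↔
      ∃ i, ∃ s ∈ S, Finsupp.single i 1 + s ≤ a := by
  have h : maxIdeal K n * Ideal.span ((fun a => monomial a (1 : K)) '' S) =
      Ideal.span ((fun a => monomial a (1 : K)) ''
        {b | ∃ i, ∃ s ∈ S, Finsupp.single i 1 + s = b}) := by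
    unfold maxIdeal
    rw [Ideal.span_mul_span']
    congr 1
    ext f
    simp only [Set.mem_mul, Set.mem_range, Set.mem_image, Set.mem_setOf_eq]
    constructor
    · rintro ⟨_, ⟨i, rfl⟩, _, ⟨s, hs, rfl⟩, rfl⟩
      exact ⟨_, ⟨i, s, hs, rfl⟩, by simp [X, monomial_mul]⟩
    · rintro ⟨_, ⟨i, s, hs, rfl⟩, rfl⟩
      exact ⟨_, ⟨i, rfl⟩, _, ⟨s, hs, rfl⟩, by simp [X, monomial_mul]⟩
  rw [h, mono_mem_iff]
  constructor
  · rintro ⟨_, ⟨i, s, hs, rfl⟩, h⟩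
    exact ⟨i, s, hs, h⟩
  · rintro ⟨i, s, hs, h⟩
    exact ⟨_, ⟨i, s, hs, rfl⟩, h⟩

lemma minGen_extreme {K : Type*} [Field K] {n : ℕ} (S : Set (Fin n →₀ ℕ))
    (hS : ∀ a ∈ S, ∀ i, a i ≤ 1) (a : Fin n →₀ ℕ)
    (ha : IsMinGen (Ideal.span ((fun a => monomial a (1 : K)) '' S)) (monomial a (1 : K))) :
    expVec a ∈ Set.extremePoints ℝ
      (newtonPolyhedron (Ideal.span ((fun a => monomial a (1 : K)) '' S))) := by
  obtain ⟨h1, h2⟩ := ha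
  rw [not_minGen_iff] at h2
  have hmin : ∀ s ∈ S, s ≤ a → s = a := by
    intro s hs hsa
    by_contra hne
    apply h2
    have : ∃ i, s i < a i := by
      by_contra hcon
      push Not at hcon
      exact hne (le_antisymm hsa hcon)
    obtain ⟨i, hi⟩ := this
    refine ⟨i, s, hs, fun j => ?_⟩
    have := hsa j
    by_cases hj : i = j
    · subst hj; simp; omega
    · simpa [Finsupp.single_apply, hj] using this
  have haS : ∀ i, a i ≤ 1 := by
    obtain ⟨s, hs, hsa⟩ := (mono_mem_iff S a).1 h1
    have := hmin s hs hsa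
    subst this
    exact hS s hs
  have hnn : ∀ v ∈ newtonPolyhedron (Ideal.span ((fun a => monomial a (1 : K)) '' S)),
      ∀ j, 0 ≤ v j := by
    intro v hv j
    refine convexHull_min (t := {v : Fin n → ℝ | 0 ≤ v j}) ?_ ?_ hv
    · rintro _ ⟨b, _, rfl⟩
      simp [expVec]
    · intro x hx y hy p q hp hq _
      simp only [Set.mem_setOf_eq, Pi.add_apply, Pi.smul_apply, smul_eq_mul] at *
      positivity
  let g : Fin n → (Fin n → ℝ) → ℝ := fun i v => v i + ∑ j, (1 - (a j : ℝ)) * v j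
  have glin : ∀ i (p q : ℝ) x y, g i (p • x + q • y) = p * g i x + q * g i y := by
    intro i p q x y
    simp only [g, Pi.add_apply, Pi.smul_apply, smul_eq_mul, mul_add, Finset.sum_add_distrib,
      Finset.mul_sum]
    have e1 : ∀ (r : ℝ) (z : Fin n → ℝ), ∑ j, (1 - (a j : ℝ)) * (r * z j)
      = ∑ j, r * ((1 - (a j : ℝ)) * z j) := fun r z => Finset.sum_congr rfl fun j _ => by ring
    rw [e1, e1]; ring
  have hw : ∀ j, (0 : ℝ) ≤ 1 - (a j : ℝ) := by
    intro j
    have : (a j : ℝ) ≤ 1 := by exact_mod_cast haS j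
    linarith
  have hg : ∀ i, a i = 1 → ∀ v ∈ newtonPolyhedron
      (Ideal.span ((fun a => monomial a (1 : K)) '' S)), 1 ≤ g i v := by
    intro i hi v hv
    refine convexHull_min (t := {v : Fin n → ℝ | 1 ≤ g i v}) ?_ ?_ hv
    · rintro _ ⟨b, hb, rfl⟩
      obtain ⟨s, hs, hsb⟩ := (mono_mem_iff S b).1 hb
      have hnonneg : ∀ j ∈ Finset.univ, 0 ≤ (1 - (a j : ℝ)) * expVec b j :=
        fun j _ => mul_nonneg (hw j) (by simp [expVec])
      simp only [Set.mem_setOf_eq, g]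
      by_cases hsa : s ≤ a
      · have := hmin s hs hsa
        subst this
        have h3 := hsb i
        rw [hi] at h3
        have h4 : (1 : ℝ) ≤ expVec b i := by
          simp only [expVec]; exact_mod_cast h3
        have := Finset.sum_nonneg hnonneg
        linarith
      · have : ∃ j, a j < s j := by
          by_contra hcon
          push Not at hcon
          exact hsa hcon
        obtain ⟨j, hj⟩ := this
        have h5 := hS s hs j
        have h6 := hsb j
        have h7 : a j = 0 := by omega
        have h8 : 1 ≤ b j := by omega
        have h9 := Finset.single_le_sum hnonneg (Finset.mem_univ j)
        have h10 : (1 : ℝ) ≤ expVec b j := by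
          simp only [expVec]; exact_mod_cast h8
        have h11 : 0 ≤ expVec b i := by simp [expVec]
        rw [h7] at h9
        simp only [Nat.cast_zero, sub_zero, one_mul] at h9
        linarith
    · intro x hx y hy p q hp hq hpq
      simp only [Set.mem_setOf_eq] at *
      rw [glin]
      nlinarith
  have hga : ∀ i, a i = 1 → g i (expVec a) = 1 := by
    intro i hi
    simp only [g]
    rw [Finset.sum_eq_zero]
    · simp [expVec, hi]
    · intro j _
      have := haS j
      have : a j = 0 ∨ a j = 1 := by omega
      rcases this with h | h <;> simp [expVec, h]
  rw [mem_extremePoints_iff_left]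
  refine ⟨subset_convexHull ℝ _ ⟨a, h1, rfl⟩, ?_⟩
  rintro x hx y hy ⟨p, q, hp, hq, hpq, hxy⟩
  have hx0 : ∀ j, a j = 0 → x j = 0 := by
    intro j hj
    have h3 := congrFun hxy j
    simp only [Pi.add_apply, Pi.smul_apply, smul_eq_mul, expVec, hj, Nat.cast_zero] at h3
    have h4 := mul_nonneg hq.le (hnn y hy j)
    have h5 := mul_nonneg hp.le (hnn x hx j)
    have h6 : p * x j = 0 := by linarith
    exact (mul_eq_zero.1 h6).resolve_left hp.ne'
  funext i
  have hai := haS i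
  have : a i = 0 ∨ a i = 1 := by omega
  rcases this with h | h
  · rw [hx0 i h]; simp [expVec, h]
  · have h3 := hga i h
    rw [← hxy, glin] at h3
    have h4 := hg i h x hx
    have h5 := hg i h y hy
    have h6 : g i x = 1 := by
      have e1 := mul_nonneg hq.le (sub_nonneg.2 h5)
      have e2 := mul_nonneg hp.le (sub_nonneg.2 h4)
      have h7 : p * (g i x - 1) = 0 := by linarith
      have := (mul_eq_zero.1 h7).resolve_left hp.ne'
      linarith
    simp only [g] at h6
    rw [Finset.sum_eq_zero] at h6
    · simp [expVec, h]; linarith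
    · intro j _
      have := haS j
      have : a j = 0 ∨ a j = 1 := by omega
      rcases this with h | h
      · simp [hx0 j h]
      · simp [h]

theorem stmt5 {K : Type*} [Field K] {n : ℕ} (N : Ideal (MvPolynomial (Fin n) K))
    (hsqfree : ∃ S : Set (Fin n →₀ ℕ), (∀ a ∈ S, ∀ i, a i ≤ 1) ∧
        N = Ideal.span ((fun a => monomial a (1 : K)) '' S)) :
    (∀ a : Fin n →₀ ℕ, IsMinGen N (monomial a (1 : K)) →
        expVec a ∈ Set.extremePoints ℝ (newtonPolyhedron N)) ∧
    {v | ∃ a : Fin n →₀ ℕ, IsMinGen N (monomial a (1 : K)) ∧ v = expVec a}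
      = Set.extremePoints ℝ (newtonPolyhedron N) := by
  obtain ⟨S, hS, rfl⟩ := hsqfree
  refine ⟨minGen_extreme S hS, ?_⟩
  apply Set.Subset.antisymm
  · rintro _ ⟨a, ha, rfl⟩
    exact minGen_extreme S hS a ha
  · intro v hv
    obtain ⟨a, ha, rfl⟩ := extremePoints_convexHull_subset hv
    refine ⟨a, ⟨ha, ?_⟩, rfl⟩
    rw [not_minGen_iff]
    rintro ⟨i, s, hs, hsa⟩
    obtain ⟨c, rfl⟩ := exists_add_of_le hsa
    rw [mem_extremePoints_iff_left] at hv
    have hx : expVec (s + c) ∈ newtonPolyhedron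
        (Ideal.span ((fun a => monomial a (1 : K)) '' S)) :=
      subset_convexHull ℝ _ ⟨_, (mono_mem_iff S _).2 ⟨s, hs, le_self_add⟩, rfl⟩
    have hy : expVec (s + (c + Finsupp.single i 2)) ∈ newtonPolyhedron
        (Ideal.span ((fun a => monomial a (1 : K)) '' S)) :=
      subset_convexHull ℝ _ ⟨_, (mono_mem_iff S _).2 ⟨s, hs, le_self_add⟩, rfl⟩
    have h := hv.2 _ hx _ hy ⟨1/2, 1/2, by norm_num, by norm_num, by norm_num, ?_⟩
    · have := congrFun h i
      simp [expVec] at this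
    · funext j
      by_cases hj : i = j
      · subst hj; simp [expVec]; ring
      · simp [expVec, Finsupp.single_apply, hj]; ring
end
end

section
/- Let I ⊆ A = K[x_1,…,x_n] be a nonzero monomial ideal, u ∈ ℝ^n nonzero and c ∈ ℝ. The hyperplane S = {v ∈ ℝ^n : ⟨v,u⟩ = c} is a supporting hyperplane of conv(I) if and only if all coordinates of u are nonnegative, ⟨a,u⟩ ≥ c for every a ∈ ext(I), and ⟨a,u⟩ = c for some a ∈ ext(I). -/
open MvPolynomial Pointwise

attribute [local instance] Classical.propDecidable

noncomputable section

/-- `dotR u` as a continuous linear functional. -/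
def dotL {n : ℕ} (u : Fin n → ℝ) : (Fin n → ℝ) →L[ℝ] ℝ :=
  ∑ i, u i • ContinuousLinearMap.proj i

lemma dotL_apply {n : ℕ} (u v : Fin n → ℝ) : dotL u v = dotR u v := by
  simp [dotL, dotR]

lemma face_hull {E : Type*} [AddCommGroup E] [Module ℝ E] (f : E →ₗ[ℝ] ℝ) (G : Set E) (c : ℝ)
    (h : ∀ a ∈ G, c ≤ f a) :
    ∀ v ∈ convexHull ℝ G, c ≤ f v ∧ (f v = c → v ∈ convexHull ℝ {a ∈ G | f a = c}) := by
  have hD : Convex ℝ {v | c ≤ f v ∧ (f v = c → v ∈ convexHull ℝ {a ∈ G | f a = c})} := by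
    rw [convex_iff_forall_pos]
    rintro x ⟨hx1, hx2⟩ y ⟨hy1, hy2⟩ s t hs ht hst
    have e : f (s • x + t • y) = s * f x + t * f y := by simp
    have ht' : t = 1 - s := by linarith
    have key : f (s • x + t • y) - c = s * (f x - c) + t * (f y - c) := by
      rw [e, ht']; ring
    have p1 : 0 ≤ s * (f x - c) := mul_nonneg hs.le (by linarith)
    have p2 : 0 ≤ t * (f y - c) := mul_nonneg ht.le (by linarith)
    refine ⟨by linarith, fun hc => ?_⟩
    have q1 : s * (f x - c) = 0 := by linarith
    have q2 : t * (f y - c) = 0 := by linarith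
    have r1 : f x = c := by
      rcases mul_eq_zero.1 q1 with h | h <;> linarith
    have r2 : f y = c := by
      rcases mul_eq_zero.1 q2 with h | h <;> linarith
    exact convex_convexHull ℝ _ (hx2 r1) (hy2 r2) hs.le ht.le hst
  intro v hv
  exact convexHull_min (t := {v | c ≤ f v ∧ (f v = c → v ∈ convexHull ℝ {a ∈ G | f a = c})})
    (fun a ha => ⟨h a ha, fun hc => subset_convexHull ℝ _ ⟨ha, hc⟩⟩) hD hv

lemma face_extreme {E : Type*} [AddCommGroup E] [Module ℝ E] (f : E →ₗ[ℝ] ℝ) (G : Set E) (c : ℝ)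
    (h : ∀ a ∈ G, c ≤ f a) :
    IsExtreme ℝ (convexHull ℝ G) (convexHull ℝ {a ∈ G | f a = c}) := by
  have hF : ∀ v ∈ convexHull ℝ {a ∈ G | f a = c}, f v = c := by
    intro v hv
    exact convexHull_min (t := {v | f v = c}) (fun a ha => ha.2)
      (convex_hyperplane f.isLinear c) hv
  refine ⟨convexHull_mono (fun a ha => ha.1), ?_⟩
  rintro x hx y hy z hz ⟨s, t, hs, ht, hst, rfl⟩
  have hz' := hF _ hz
  have e : f (s • x + t • y) = s * f x + t * f y := by simp
  have ht' : t = 1 - s := by linarith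
  obtain ⟨hx1, hx2⟩ := face_hull f G c h x hx
  obtain ⟨hy1, hy2⟩ := face_hull f G c h y hy
  have key : f (s • x + t • y) - c = s * (f x - c) + t * (f y - c) := by
    rw [e, ht']; ring
  have p1 : 0 ≤ s * (f x - c) := mul_nonneg hs.le (by linarith)
  have p2 : 0 ≤ t * (f y - c) := mul_nonneg ht.le (by linarith)
  have q1 : s * (f x - c) = 0 := by linarith
  apply hx2
  rcases mul_eq_zero.1 q1 with h | h <;> linarith

/-- If `dotR u` is bounded below by `c` on the exponent set and the value `c` is attained on the
hull, then it is attained at an extreme point. -/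
lemma exists_ext {n : ℕ} (Γ : Set (Fin n →₀ ℕ)) (u : Fin n → ℝ) (c : ℝ)
    (h : ∀ a ∈ Γ, c ≤ dotR u (expVec a)) (v : Fin n → ℝ)
    (hv : v ∈ convexHull ℝ (expVec '' Γ)) (hvc : dotR u v = c) :
    ∃ w ∈ Set.extremePoints ℝ (convexHull ℝ (expVec '' Γ)), dotR u w = c := by
  set f : (Fin n → ℝ) →ₗ[ℝ] ℝ := (dotL u).toLinearMap with hf
  have hfa : ∀ w, f w = dotR u w := fun w => dotL_apply u w
  have hG : ∀ a ∈ expVec '' Γ, c ≤ f a := by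
    rintro _ ⟨a, ha, rfl⟩
    rw [hfa]; exact h a ha
  set T : Set (Fin n → ℝ) := {a ∈ expVec '' Γ | f a = c} with hT
  have hTne : T.Nonempty := by
    rw [← convexHull_nonempty_iff (𝕜 := ℝ)]
    exact ⟨v, (face_hull f _ c hG v hv).2 (by rw [hfa, hvc])⟩
  -- minimise the coordinate sum on `T`
  obtain ⟨_, ⟨a₁, ha₁, rfl⟩, ha₁c⟩ := hTne
  obtain ⟨a₀, ⟨ha₀, ha₀c⟩, hmin⟩ : ∃ a₀ : Fin n →₀ ℕ, (a₀ ∈ Γ ∧ f (expVec a₀) = c) ∧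
      ∀ b ∈ Γ, f (expVec b) = c → ∑ i, a₀ i ≤ ∑ i, b i := by
    let Q : Set (Fin n →₀ ℕ) := {a | a ∈ Γ ∧ f (expVec a) = c}
    have hQ : Q.Nonempty := ⟨a₁, ha₁, ha₁c⟩
    refine ⟨Function.argminOn (fun a : Fin n →₀ ℕ => ∑ i, a i) Q hQ,
      Function.argminOn_mem _ Q hQ, fun b hb hbc => ?_⟩
    exact Function.argminOn_le (fun a : Fin n →₀ ℕ => ∑ i, a i) Q (a := b) ⟨hb, hbc⟩
  set g : (Fin n → ℝ) →ₗ[ℝ] ℝ := (dotL (fun _ => (1 : ℝ))).toLinearMap with hg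
  have hga : ∀ b : Fin n →₀ ℕ, g (expVec b) = ((∑ i, b i : ℕ) : ℝ) := by
    intro b
    have : g (expVec b) = dotR (fun _ => (1 : ℝ)) (expVec b) := dotL_apply _ _
    rw [this]; simp [dotR, expVec]
  set m : ℝ := g (expVec a₀) with hm
  have hgT : ∀ a ∈ T, m ≤ g a := by
    rintro _ ⟨⟨b, hb, rfl⟩, hbc⟩
    rw [hm, hga, hga]; exact_mod_cast hmin b hb hbc
  have hE := (face_extreme f _ c hG).trans (face_extreme g T m hgT)
  set T' : Set (Fin n → ℝ) := {a ∈ T | g a = m} with hT'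
  have hfin : T'.Finite := by
    have : (Set.Iic (Finsupp.equivFunOnFinite.symm (fun _ : Fin n => ∑ i, a₀ i))).Finite :=
      Set.finite_Iic _
    refine (this.image expVec).subset ?_
    rintro _ ⟨⟨⟨b, hb, rfl⟩, hbc⟩, hbm⟩
    refine ⟨b, ?_, rfl⟩
    rw [hm, hga, hga] at hbm
    have hbm' : ∑ i, b i = ∑ i, a₀ i := by exact_mod_cast hbm
    intro i
    simp only [Finsupp.equivFunOnFinite_symm_apply_apply]
    rw [← hbm']
    exact Finset.single_le_sum (f := fun i => b i) (fun _ _ => Nat.zero_le _) (Finset.mem_univ i)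
  have hne : (convexHull ℝ T').Nonempty :=
    ⟨expVec a₀, subset_convexHull ℝ _ ⟨⟨⟨a₀, ha₀, rfl⟩, ha₀c⟩, rfl⟩⟩
  have hcomp : IsCompact (convexHull ℝ T') := hfin.isCompact_convexHull ℝ
  obtain ⟨w, hw⟩ := hcomp.extremePoints_nonempty hne
  refine ⟨w, hE.extremePoints_subset_extremePoints hw, ?_⟩
  rw [← hfa]
  have : w ∈ convexHull ℝ T := convexHull_mono (fun a ha => ha.1) hw.1
  exact convexHull_min (t := {v | f v = c}) (fun a ha => ha.2)
      (convex_hyperplane f.isLinear c) this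

lemma hull_ge {n : ℕ} (Γ : Set (Fin n →₀ ℕ)) (u : Fin n → ℝ) (c : ℝ)
    (h : ∀ a ∈ Γ, c ≤ dotR u (expVec a)) (v : Fin n → ℝ)
    (hv : v ∈ convexHull ℝ (expVec '' Γ)) : c ≤ dotR u v := by
  have := (face_hull (dotL u).toLinearMap (expVec '' Γ) c ?_ v hv).1
  · exact (dotL_apply u v) ▸ this
  · rintro _ ⟨a, ha, rfl⟩
    exact (h a ha).trans_eq (dotL_apply u _).symm

lemma exists_min {n : ℕ} (Γ : Set (Fin n →₀ ℕ)) (hΓ : Γ.Nonempty) (u : Fin n → ℝ)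
    (hu : ∀ i, 0 ≤ u i) :
    ∃ a ∈ Γ, ∀ b ∈ Γ, dotR u (expVec a) ≤ dotR u (expVec b) := by
  have hmono : Monotone (fun a : Fin n →₀ ℕ => dotR u (expVec a)) := by
    intro a b hab
    refine Finset.sum_le_sum fun i _ => mul_le_mul_of_nonneg_left ?_ (hu i)
    exact Nat.cast_le.2 (hab i)
  have hwf := ((Set.isPWO_of_wellQuasiOrderedLE Γ).image_of_monotone hmono).isWF
  have hne : ((fun a : Fin n →₀ ℕ => dotR u (expVec a)) '' Γ).Nonempty := hΓ.image _
  obtain ⟨a, ha, hae⟩ := hwf.min_mem hne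
  refine ⟨a, ha, fun b hb => ?_⟩
  have := hwf.min_le hne ⟨b, hb, rfl⟩
  exact hae.le.trans this

theorem stmt7 {K : Type*} [Field K] {n : ℕ} (I : Ideal (MvPolynomial (Fin n) K))
    (hI : IsMonomialIdeal I) (hne : I ≠ ⊥) (u : Fin n → ℝ) (hu : u ≠ 0) (c : ℝ) :
    IsSupp (newtonPolyhedron I) u c ↔
      ((∀ i, 0 ≤ u i) ∧
       (∀ v ∈ Set.extremePoints ℝ (newtonPolyhedron I), c ≤ dotR u v) ∧
       ∃ v ∈ Set.extremePoints ℝ (newtonPolyhedron I), dotR u v = c) := by 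
  set Γ : Set (Fin n →₀ ℕ) := {a | monomial a (1 : K) ∈ I} with hΓ
  have hN : newtonPolyhedron I = convexHull ℝ (expVec '' Γ) := by
    unfold newtonPolyhedron
    congr 1
    ext v
    constructor
    · rintro ⟨a, ha, rfl⟩
      exact ⟨a, ha, rfl⟩
    · rintro ⟨a, ha, rfl⟩
      exact ⟨a, ha, rfl⟩
  have hne' : Γ.Nonempty := by
    obtain ⟨S, hS⟩ := hI
    rcases S.eq_empty_or_nonempty with rfl | ⟨a, ha⟩
    · exact absurd (by simpa using hS) hne
    · refine ⟨a, ?_⟩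
      change monomial a (1 : K) ∈ I
      rw [hS]
      exact Ideal.subset_span ⟨a, ha, rfl⟩
  have hup : ∀ a ∈ Γ, ∀ b, b + a ∈ Γ := by
    intro a ha b
    have : monomial (b + a) (1 : K) = monomial b 1 * monomial a 1 := by
      rw [monomial_mul, one_mul]
    change monomial (b + a) (1 : K) ∈ I
    rw [this]
    exact I.mul_mem_left _ ha
  rw [hN]
  constructor
  · rintro ⟨h1, v, hv, hvc⟩
    have h1' : ∀ a ∈ Γ, c ≤ dotR u (expVec a) := fun a ha =>
      h1 _ (subset_convexHull ℝ _ ⟨a, ha, rfl⟩)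
    refine ⟨fun i => ?_, fun w hw => h1 w hw.1, exists_ext Γ u c h1' v hv hvc⟩
    by_contra! hneg
    obtain ⟨a, ha⟩ := hne'
    have hk : ∀ k : ℕ, c ≤ k * u i + dotR u (expVec a) := by
      intro k
      have := h1' _ (hup a ha (Finsupp.single i k))
      have e : dotR u (expVec (Finsupp.single i k + a)) = k * u i + dotR u (expVec a) := by
        simp [dotR, expVec, mul_add, Finset.sum_add_distrib, Finsupp.single_apply, mul_comm]
      rwa [e] at this
    obtain ⟨k, hk'⟩ := exists_nat_gt ((dotR u (expVec a) - c) / (-u i))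
    rw [div_lt_iff₀ (by linarith)] at hk'
    have := hk k
    linarith
  · rintro ⟨h0, h1, w, hw, hwc⟩
    refine ⟨fun v hv => ?_, w, hw.1, hwc⟩
    obtain ⟨a, ha, hmin⟩ := exists_min Γ hne' u h0
    obtain ⟨z, hz, hzc⟩ := exists_ext Γ u _ hmin _ (subset_convexHull ℝ _ ⟨a, ha, rfl⟩) rfl
    have := h1 z hz
    have := hull_ge Γ u _ hmin v hv
    linarith
end
end

section
/- Let I ⊆ A = K[x_1,…,x_n] be a nonzero monomial ideal, u ∈ ℝ^n nonzero, c ∈ ℝ, and let n_1, n_2 ≥ 1 be integers with q = n_2/n_1. Then S = {v ∈ ℝ^n : ⟨v,u⟩ = c} is a supporting hyperplane of conv(I^{n_1}) if and only if qS = {v ∈ ℝ^n : ⟨v,u⟩ = qc} is a supporting hyperplane of conv(I^{n_2}). -/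
open MvPolynomial Pointwise

attribute [local instance] Classical.propDecidable

noncomputable section

theorem aux_mono_pow {K : Type*} [Field K] {n : ℕ} {I J : Ideal (MvPolynomial (Fin n) K)}
    (hI : IsMonomialIdeal I) (hJ : IsMonomialIdeal J) : IsMonomialIdeal (I * J) := by
  obtain ⟨S, rfl⟩ := hI
  obtain ⟨T, rfl⟩ := hJ
  refine ⟨S + T, ?_⟩
  rw [Ideal.span_mul_span']
  congr 1
  ext p
  constructor
  · rintro ⟨_, ⟨a, ha, rfl⟩, _, ⟨b, hb, rfl⟩, rfl⟩
    exact ⟨a + b, ⟨a, ha, b, hb, rfl⟩, by simp [monomial_mul]⟩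
  · rintro ⟨_, ⟨a, ha, b, hb, rfl⟩, rfl⟩
    exact ⟨_, ⟨a, ha, rfl⟩, _, ⟨b, hb, rfl⟩, by simp [monomial_mul]⟩

theorem aux_mem {K : Type*} [Field K] {n : ℕ} (S : Set (Fin n →₀ ℕ)) (a : Fin n →₀ ℕ) :
    monomial a (1 : K) ∈ Ideal.span ((fun a => (monomial a (1 : K))) '' S) ↔
      ∃ s ∈ S, s ≤ a := by
  rw [mem_ideal_span_monomial_image]
  simp [support_monomial]

theorem aux_decomp {K : Type*} [Field K] {n : ℕ} {I J : Ideal (MvPolynomial (Fin n) K)}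
    (hI : IsMonomialIdeal I) (hJ : IsMonomialIdeal J) (a : Fin n →₀ ℕ)
    (ha : monomial a (1 : K) ∈ I * J) :
    ∃ b c, monomial b (1 : K) ∈ I ∧ monomial c (1 : K) ∈ J ∧ a = b + c := by
  obtain ⟨S, rfl⟩ := hI
  obtain ⟨T, rfl⟩ := hJ
  have e : Ideal.span ((fun a => (monomial a (1 : K))) '' S) *
      Ideal.span ((fun a => (monomial a (1 : K))) '' T) =
      Ideal.span ((fun a => (monomial a (1 : K))) '' (S + T)) := by
    rw [Ideal.span_mul_span']
    congr 1
    ext p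
    constructor
    · rintro ⟨_, ⟨a, ha, rfl⟩, _, ⟨b, hb, rfl⟩, rfl⟩
      exact ⟨a + b, ⟨a, ha, b, hb, rfl⟩, by simp [monomial_mul]⟩
    · rintro ⟨_, ⟨a, ha, b, hb, rfl⟩, rfl⟩
      exact ⟨_, ⟨a, ha, rfl⟩, _, ⟨b, hb, rfl⟩, by simp [monomial_mul]⟩
  rw [e, aux_mem] at ha
  obtain ⟨_, ⟨s, hs, t, ht, rfl⟩, hle⟩ := ha
  obtain ⟨d, rfl⟩ := exists_add_of_le hle
  refine ⟨s, t + d, (aux_mem S s).2 ⟨s, hs, le_rfl⟩, (aux_mem T _).2 ⟨t, ht, le_self_add⟩, ?_⟩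
  simp only [add_assoc]

theorem aux_dot_add {n : ℕ} (u : Fin n → ℝ) (a b : Fin n →₀ ℕ) :
    dotR u (expVec (a + b)) = dotR u (expVec a) + dotR u (expVec b) := by
  simp [dotR, expVec, mul_add, Finset.sum_add_distrib]

theorem aux_dot_smul {n : ℕ} (u : Fin n → ℝ) (m : ℕ) (a : Fin n →₀ ℕ) :
    dotR u (expVec (m • a)) = m * dotR u (expVec a) := by
  simp only [dotR, expVec, Finset.mul_sum]
  refine Finset.sum_congr rfl fun i _ => ?_
  simp
  ring

theorem aux_small {K : Type*} [Field K] {n : ℕ} {I : Ideal (MvPolynomial (Fin n) K)}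
    (hI : IsMonomialIdeal I) (u : Fin n → ℝ) (m : ℕ) :
    IsMonomialIdeal (I ^ (m + 1)) ∧ ∀ a, monomial a (1 : K) ∈ I ^ (m + 1) →
      ∃ b, monomial b (1 : K) ∈ I ∧ ((m + 1 : ℕ) : ℝ) * dotR u (expVec b) ≤ dotR u (expVec a) := by
  induction m with
  | zero => exact ⟨by simpa using hI, fun a ha => ⟨a, by simpa using ha, by simp⟩⟩
  | succ m ih =>
    obtain ⟨h1, h2⟩ := ih
    rw [pow_succ]
    refine ⟨aux_mono_pow h1 hI, fun a ha => ?_⟩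
    obtain ⟨b, c, hb, hc, rfl⟩ := aux_decomp h1 hI a ha
    obtain ⟨d, hd, hle⟩ := h2 b hb
    rw [aux_dot_add]
    push_cast at hle ⊢
    rcases le_total (dotR u (expVec d)) (dotR u (expVec c)) with h | h
    · exact ⟨d, hd, by linarith⟩
    · refine ⟨c, hc, ?_⟩
      have : ((m : ℝ) + 1) * dotR u (expVec c) ≤ (m + 1) * dotR u (expVec d) := by gcongr
      linarith

theorem aux_dot_lin {n : ℕ} (u : Fin n → ℝ) : IsLinearMap ℝ (dotR u) where
  map_add x y := by simp [dotR, mul_add, Finset.sum_add_distrib]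
  map_smul r x := by
    simp only [dotR, Pi.smul_apply, smul_eq_mul, Finset.mul_sum]
    exact Finset.sum_congr rfl fun i _ => by ring

theorem aux_supp {K : Type*} [Field K] {n : ℕ} (I : Ideal (MvPolynomial (Fin n) K))
    (u : Fin n → ℝ) (c : ℝ) : IsSupp (newtonPolyhedron I) u c ↔
      (∀ a, monomial a (1 : K) ∈ I → c ≤ dotR u (expVec a)) ∧
      ∃ a, monomial a (1 : K) ∈ I ∧ dotR u (expVec a) = c := by
  constructor
  · rintro ⟨h, v, hv, hvc⟩
    have h' : ∀ a, monomial a (1 : K) ∈ I → c ≤ dotR u (expVec a) :=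
      fun a ha => h _ (subset_convexHull ℝ _ ⟨a, ha, rfl⟩)
    refine ⟨h', ?_⟩
    by_contra hno
    have : newtonPolyhedron I ⊆ {w | c < dotR u w} := by
      refine convexHull_min ?_ (convex_halfSpace_gt (aux_dot_lin u) c)
      rintro _ ⟨a, ha, rfl⟩
      exact lt_of_le_of_ne (h' a ha) fun e => hno ⟨a, ha, e.symm⟩
    exact absurd hvc (this hv).ne'
  · rintro ⟨h, a, ha, hac⟩
    refine ⟨?_, expVec a, subset_convexHull ℝ _ ⟨a, ha, rfl⟩, hac⟩
    have : newtonPolyhedron I ⊆ {w | c ≤ dotR u w} := by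
      refine convexHull_min ?_ (convex_halfSpace_ge (aux_dot_lin u) c)
      rintro _ ⟨a, ha, rfl⟩
      exact h a ha
    exact this

theorem aux_pow {K : Type*} [Field K] {n : ℕ} {I : Ideal (MvPolynomial (Fin n) K)}
    (hI : IsMonomialIdeal I) (u : Fin n → ℝ) (c : ℝ) (m : ℕ) (hm : 1 ≤ m) :
    IsSupp (newtonPolyhedron (I ^ m)) u (m * c) ↔ IsSupp (newtonPolyhedron I) u c := by
  have hs : ∀ a, monomial a (1 : K) ∈ I ^ m →
      ∃ b, monomial b (1 : K) ∈ I ∧ (m : ℝ) * dotR u (expVec b) ≤ dotR u (expVec a) := by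
    obtain ⟨k, rfl⟩ := Nat.exists_eq_add_of_le' hm
    exact (aux_small hI u k).2
  have hp : ∀ a, monomial a (1 : K) ∈ I → monomial (m • a) (1 : K) ∈ I ^ m := by
    intro a ha
    have := Ideal.pow_mem_pow ha m
    rwa [monomial_pow, one_pow] at this
  have hm0 : (0 : ℝ) < m := by exact_mod_cast hm
  rw [aux_supp, aux_supp]
  constructor
  · rintro ⟨h, a, ha, hac⟩
    have h' : ∀ a, monomial a (1 : K) ∈ I → c ≤ dotR u (expVec a) := by
      intro b hb
      have := h _ (hp b hb)
      rw [aux_dot_smul] at this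
      exact le_of_mul_le_mul_left this hm0
    obtain ⟨b, hb, hle⟩ := hs a ha
    rw [hac] at hle
    exact ⟨h', b, hb, le_antisymm (le_of_mul_le_mul_left hle hm0) (h' b hb)⟩
  · rintro ⟨h, a, ha, hac⟩
    refine ⟨fun b hb => ?_, m • a, hp a ha, by rw [aux_dot_smul, hac]⟩
    obtain ⟨d, hd, hle⟩ := hs b hb
    exact (mul_le_mul_of_nonneg_left (h d hd) hm0.le).trans hle

theorem stmt8 {K : Type*} [Field K] {n : ℕ} (I : Ideal (MvPolynomial (Fin n) K))
    (hI : IsMonomialIdeal I) (hne : I ≠ ⊥)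
    (u : Fin n → ℝ) (hu : u ≠ 0) (c : ℝ) (n₁ n₂ : ℕ) (h1 : 1 ≤ n₁) (h2 : 1 ≤ n₂) :
    IsSupp (newtonPolyhedron (I ^ n₁)) u c ↔
      IsSupp (newtonPolyhedron (I ^ n₂)) u (((n₂ : ℝ) / (n₁ : ℝ)) * c) := by
  have e1 : (n₁ : ℝ) ≠ 0 := by exact_mod_cast (by omega : n₁ ≠ 0)
  have a1 := aux_pow hI u (c / n₁) n₁ h1
  have a2 := aux_pow hI u (c / n₁) n₂ h2
  rw [mul_div_cancel₀ c e1] at a1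
  rw [a1, ← a2, div_mul_eq_mul_div, mul_div_assoc]
end
end

section
/- Let I ⊆ A = K[x_1,…,x_n] be a nonzero monomial ideal and m ≥ 1 an integer. The map F ↦ mF := {m·v : v ∈ F} is a bijection from the set of proper faces of conv(I) onto the set of proper faces of conv(I^m). -/
open MvPolynomial Pointwise

attribute [local instance] Classical.propDecidable

noncomputable section

lemma dotR_smul {n : ℕ} (u v : Fin n → ℝ) (r : ℝ) : dotR u (r • v) = r * dotR u v := by
  simp only [dotR, Finset.mul_sum, Pi.smul_apply, smul_eq_mul]
  exact Finset.sum_congr rfl fun i _ => by ring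

lemma IsProperFace.smul_pos {n : ℕ} {C F : Set (Fin n → ℝ)} {r : ℝ} (hr : 0 < r)
    (h : IsProperFace C F) : IsProperFace (r • C) (r • F) := by
  obtain ⟨u, c, hu, ⟨h1, v0, hv0, hv0c⟩, hF, hFC⟩ := h
  refine ⟨u, r * c, hu, ⟨?_, r • v0, Set.smul_mem_smul_set hv0, ?_⟩, ?_, ?_⟩
  · rintro _ ⟨v, hv, rfl⟩
    simp only [dotR_smul]
    exact mul_le_mul_of_nonneg_left (h1 v hv) hr.le
  · rw [dotR_smul, hv0c]
  · ext w
    constructor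
    · rintro ⟨v, hv, rfl⟩
      rw [hF] at hv
      exact ⟨Set.smul_mem_smul_set hv.1, by simp only [dotR_smul, hv.2]⟩
    · rintro ⟨⟨v, hv, rfl⟩, hw⟩
      simp only [dotR_smul] at hw
      refine Set.smul_mem_smul_set ?_
      rw [hF]
      exact ⟨hv, mul_left_cancel₀ hr.ne' hw⟩
  · intro he
    apply hFC
    have := congrArg (fun s => r⁻¹ • s) he
    simpa only [smul_smul, inv_mul_cancel₀ hr.ne', one_smul] using this

/-- Powers of a monomial ideal are generated by upward closed sets of exponents lying in the
dilated Newton polyhedron. -/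
lemma pow_gen {K : Type*} [Field K] {n : ℕ} (I : Ideal (MvPolynomial (Fin n) K))
    (hI : IsMonomialIdeal I) (k : ℕ) :
    ∃ T : Set (Fin n →₀ ℕ), I ^ (k + 1) = Ideal.span ((fun a => monomial a (1 : K)) '' T) ∧
      (∀ t ∈ T, ∀ e, t + e ∈ T) ∧
      ∀ t ∈ T, expVec t ∈ ((k + 1 : ℕ) : ℝ) • newtonPolyhedron I := by
  have hG : I = Ideal.span ((fun a => monomial a (1 : K)) '' {a | monomial a (1 : K) ∈ I}) := by
    apply le_antisymm
    · obtain ⟨S, hS⟩ := hI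
      conv_lhs => rw [hS]
      refine Ideal.span_mono (Set.image_mono fun a ha => ?_)
      change monomial a (1 : K) ∈ I
      rw [hS]
      exact Ideal.subset_span ⟨a, ha, rfl⟩
    · rw [Ideal.span_le]
      rintro _ ⟨a, ha, rfl⟩
      exact ha
  induction k with
  | zero =>
    refine ⟨{a | monomial a (1 : K) ∈ I}, by simpa using hG, ?_, ?_⟩
    · intro t ht e
      have : monomial (t + e) (1 : K) = monomial e 1 * monomial t 1 := by
        rw [monomial_mul, one_mul, add_comm]
      change monomial (t + e) (1 : K) ∈ I
      rw [this]
      exact I.mul_mem_left _ ht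
    · intro t ht
      simp only [zero_add, Nat.cast_one, one_smul]
      exact subset_convexHull ℝ _ ⟨t, ht, rfl⟩
  | succ k ih =>
    obtain ⟨T, hT, hup, hTC⟩ := ih
    refine ⟨T + {a | monomial a (1 : K) ∈ I}, ?_, ?_, ?_⟩
    · rw [pow_succ, hT]
      conv_lhs => rw [hG]
      rw [Ideal.span_mul_span']
      congr 1
      ext p
      constructor
      · rintro ⟨_, ⟨t, ht, rfl⟩, _, ⟨g, hg, rfl⟩, rfl⟩
        exact ⟨t + g, Set.add_mem_add ht hg, by simp [monomial_mul]⟩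
      · rintro ⟨_, ⟨t, ht, g, hg, rfl⟩, rfl⟩
        exact ⟨_, ⟨t, ht, rfl⟩, _, ⟨g, hg, rfl⟩, by simp [monomial_mul]⟩
    · rintro _ ⟨t, ht, g, hg, rfl⟩ e
      exact ⟨t + e, hup t ht e, g, hg, by simp only; abel⟩
    · rintro _ ⟨t, ht, g, hg, rfl⟩
      have hc : Convex ℝ (newtonPolyhedron I) := convex_convexHull ℝ _
      rw [Nat.cast_succ, hc.add_smul (by positivity) zero_le_one, one_smul]
      simp only [expVec_add]
      exact Set.add_mem_add (hTC t ht) (subset_convexHull ℝ _ ⟨g, hg, rfl⟩)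

lemma newton_pow {K : Type*} [Field K] {n : ℕ} (I : Ideal (MvPolynomial (Fin n) K))
    (hI : IsMonomialIdeal I) (m : ℕ) (hm : 1 ≤ m) :
    newtonPolyhedron (I ^ m) = (m : ℝ) • newtonPolyhedron I := by
  obtain ⟨k, rfl⟩ : ∃ k, m = k + 1 := ⟨m - 1, by omega⟩
  apply Set.Subset.antisymm
  · refine convexHull_min ?_ ((convex_convexHull ℝ _).smul _)
    rintro _ ⟨a, ha, rfl⟩
    obtain ⟨T, hT, hup, hTC⟩ := pow_gen I hI k
    rw [hT, mem_ideal_span_monomial_image] at ha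
    obtain ⟨t, ht, hta⟩ := ha a (by simp)
    have := hup t ht (a - t)
    rw [add_tsub_cancel_of_le hta] at this
    exact hTC a this
  · rw [newtonPolyhedron, ← convexHull_smul]
    refine convexHull_mono ?_
    rintro _ ⟨_, ⟨a, ha, rfl⟩, rfl⟩
    refine ⟨(k + 1) • a, ?_, ?_⟩
    · have := Ideal.pow_mem_pow ha (k + 1)
      rwa [monomial_pow, one_pow] at this
    · funext i
      simp [expVec]

theorem stmt9 {K : Type*} [Field K] {n : ℕ} (I : Ideal (MvPolynomial (Fin n) K))
    (hI : IsMonomialIdeal I) (hne : I ≠ ⊥) (m : ℕ) (hm : 1 ≤ m) :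
    Set.BijOn (fun F => (fun v => (m : ℝ) • v) '' F)
      {F | IsProperFace (newtonPolyhedron I) F}
      {F | IsProperFace (newtonPolyhedron (I ^ m)) F} := by
  have hm0 : (0 : ℝ) < m := by exact_mod_cast hm
  have hN := newton_pow I hI m hm
  refine ⟨?_, ?_, ?_⟩
  · intro F hF
    change IsProperFace _ ((m : ℝ) • F)
    rw [hN]
    exact IsProperFace.smul_pos hm0 hF
  · intro F _ G _ h
    exact (Set.image_injective.mpr (smul_right_injective _ hm0.ne')) h
  · intro F hF
    refine ⟨(m : ℝ)⁻¹ • F, ?_, ?_⟩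
    · have := IsProperFace.smul_pos (inv_pos.mpr hm0) hF
      rwa [hN, smul_smul, inv_mul_cancel₀ hm0.ne', one_smul] at this
    · change (m : ℝ) • ((m : ℝ)⁻¹ • F) = F
      rw [smul_smul, mul_inv_cancel₀ hm0.ne', one_smul]
end
end

section
/- Let J = (x^{a_1},…,x^{a_r}) ⊆ A = K[x_1,…,x_n] be an extremal monomial ideal, i.e. ext(J) = {a_1,…,a_r}, with π_F as in the context. Suppose that for each compact face F of conv(J) a polynomial g_F ∈ T = K[y_1,…,y_r] is given, such that π_G(g_F) = π_G(g_G) for all compact faces G ⊆ F of conv(J). Then there exists a single polynomial g ∈ T with π_F(g) = π_F(g_F) for every compact face F of conv(J). (This is the surjectivity of the natural map onto the inverse limit lim_{F ∈ F_c} K[F], which together with Rad(D) = ⋂_F ker(π_F) identifies the reduced fiber ring F(J)_red with this inverse limit.) -/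
open MvPolynomial Pointwise

attribute [local instance] Classical.propDecidable

noncomputable section

/-- The `K`-algebra map `π_F : K[y_1,…,y_r] → A[t]` sending `y_j` to `x^{a_j}·t` if the
exponent `a_j` lies on the face `F`, and to `0` otherwise. -/
def piF {K : Type*} [Field K] {n r : ℕ} (a : Fin r → (Fin n →₀ ℕ)) (F : Set (Fin n → ℝ)) :
    MvPolynomial (Fin r) K →ₐ[K] Polynomial (MvPolynomial (Fin n) K) :=
  aeval (fun p => if expVec (a p) ∈ F
    then Polynomial.C (monomial (a p) (1 : K)) * Polynomial.X else 0)

/-- The defining property of the ideal `D ⊆ T = K[y_1,…,y_r]`, the kernel of the natural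
surjection `T → F(J) = ⊕_d J^d/(x_1,…,x_n)J^d`: a polynomial `g` lies in `D` iff for each
`d ≥ 0` the evaluation of its degree-`d` homogeneous component at `(x^{a_1},…,x^{a_r})`
lies in `(x_1,…,x_n)·J^d`. -/
def IsFiberKernel {K : Type*} [Field K] {n r : ℕ} (a : Fin r → (Fin n →₀ ℕ))
    (J : Ideal (MvPolynomial (Fin n) K)) (D : Ideal (MvPolynomial (Fin r) K)) : Prop :=
  ∀ g : MvPolynomial (Fin r) K, g ∈ D ↔
    ∀ d : ℕ, aeval (fun p => (monomial (a p) (1 : K) : MvPolynomial (Fin n) K))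
        (homogeneousComponent d g) ∈ maxIdeal K n * J ^ d

/-- bidegree of a monomial of `T`. -/
def wt16 {n r : ℕ} (a : Fin r → (Fin n →₀ ℕ)) (m : Fin r →₀ ℕ) : ℕ × (Fin n →₀ ℕ) :=
  (∑ j, m j, ∑ j, m j • a j)

def on16 {n r : ℕ} (a : Fin r → (Fin n →₀ ℕ)) (F : Set (Fin n → ℝ)) (m : Fin r →₀ ℕ) : Prop :=
  ∀ j, m j ≠ 0 → expVec (a j) ∈ F

def cf16 {K : Type*} [Field K] {n r : ℕ} (a : Fin r → (Fin n →₀ ℕ)) (F : Set (Fin n → ℝ))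
    (w : ℕ × (Fin n →₀ ℕ)) (g : MvPolynomial (Fin r) K) : K :=
  ((piF a F g).coeff w.1).coeff w.2

lemma piF_monomial16 {K : Type*} [Field K] {n r : ℕ} (a : Fin r → (Fin n →₀ ℕ))
    (F : Set (Fin n → ℝ)) (m : Fin r →₀ ℕ) (k : K) :
    piF a F (monomial m k) = if on16 a F m then
      Polynomial.monomial (wt16 a m).1 (monomial (wt16 a m).2 k) else 0 := by
  unfold piF
  rw [aeval_monomial, Finsupp.prod_fintype _ _ (by simp)]
  split_ifs with h
  · have : ∀ j, (if expVec (a j) ∈ F then Polynomial.C (monomial (a j) (1 : K)) * Polynomial.X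
        else 0) ^ m j = Polynomial.monomial (m j) (monomial (m j • a j) (1 : K)) := by
      intro j
      by_cases hj : m j = 0
      · simp [hj]
      · rw [if_pos (h j hj), mul_pow, ← Polynomial.C_pow, Polynomial.C_mul_X_pow_eq_monomial,
          monomial_pow, one_pow]
    simp only [this]
    have key : ∀ s : Finset (Fin r), ∏ j ∈ s, Polynomial.monomial (m j)
        (monomial (m j • a j) (1 : K)) =
        Polynomial.monomial (∑ j ∈ s, m j) (monomial (∑ j ∈ s, m j • a j) (1 : K)) := by
      intro s
      induction s using Finset.induction_on with
      | empty => simp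
      | insert x s hx ih =>
        rw [Finset.prod_insert hx, ih, Finset.sum_insert hx, Finset.sum_insert hx,
          Polynomial.monomial_mul_monomial, monomial_mul, one_mul]
    rw [key, wt16, Polynomial.algebraMap_apply, MvPolynomial.algebraMap_eq,
      Polynomial.C_mul_monomial, C_mul_monomial, mul_one]
  · unfold on16 at h
    push Not at h
    obtain ⟨j, hj, hF⟩ := h
    rw [Finset.prod_eq_zero (Finset.mem_univ j), mul_zero]
    rw [if_neg hF, zero_pow hj]

lemma cf_monomial16 {K : Type*} [Field K] {n r : ℕ} (a : Fin r → (Fin n →₀ ℕ))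
    (F : Set (Fin n → ℝ)) (w) (m : Fin r →₀ ℕ) (k : K) :
    cf16 a F w (monomial m k) = if on16 a F m ∧ wt16 a m = w then k else 0 := by
  unfold cf16
  rw [piF_monomial16]
  by_cases h : on16 a F m
  · simp only [h, if_true, true_and, Polynomial.coeff_monomial, Prod.ext_iff]
    by_cases h1 : (wt16 a m).1 = w.1
    · simp [h1, coeff_monomial]
    · simp [h1]
  · simp [h]

lemma cf_sum16 {K : Type*} [Field K] {n r : ℕ} (a : Fin r → (Fin n →₀ ℕ))
    (F : Set (Fin n → ℝ)) (w) {ι : Type*} (s : Finset ι) (f : ι → MvPolynomial (Fin r) K) :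
    cf16 a F w (∑ i ∈ s, f i) = ∑ i ∈ s, cf16 a F w (f i) := by
  unfold cf16
  rw [map_sum, Polynomial.finset_sum_coeff, MvPolynomial.coeff_sum]

lemma cf_eq16 {K : Type*} [Field K] {n r : ℕ} (a : Fin r → (Fin n →₀ ℕ))
    (F : Set (Fin n → ℝ)) (w) (g : MvPolynomial (Fin r) K) :
    cf16 a F w g = ∑ m ∈ g.support, if on16 a F m ∧ wt16 a m = w then coeff m g else 0 := by
  conv_lhs => rw [g.as_sum]
  rw [cf_sum16]
  exact Finset.sum_congr rfl fun m _ => cf_monomial16 a F w m _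

lemma dotR_add16 {n : ℕ} (u v w : Fin n → ℝ) : dotR u (v + w) = dotR u v + dotR u w := by
  simp [dotR, mul_add, Finset.sum_add_distrib]

lemma dotR_add_left16 {n : ℕ} (u v w : Fin n → ℝ) : dotR (u + v) w = dotR u w + dotR v w := by
  simp [dotR, add_mul, Finset.sum_add_distrib]

lemma dotR_smul16 {n : ℕ} (u v : Fin n → ℝ) (c : ℝ) : dotR u (c • v) = c * dotR u v := by
  simp only [dotR, Pi.smul_apply, smul_eq_mul, Finset.mul_sum]
  exact Finset.sum_congr rfl fun i _ => by ring

/-- being on a face depends only on the bidegree -/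
lemma on_of_wt16 {n r : ℕ} (a : Fin r → (Fin n →₀ ℕ)) {C F : Set (Fin n → ℝ)}
    (ha : ∀ j, expVec (a j) ∈ C) (hF : IsProperFace C F) {m m' : Fin r →₀ ℕ}
    (hm : on16 a F m) (hw : wt16 a m = wt16 a m') : on16 a F m' := by
  obtain ⟨u, c, -, ⟨h1, -⟩, rfl, -⟩ := hF
  have hd : ∀ m : Fin r →₀ ℕ, dotR u (expVec (wt16 a m).2) - (wt16 a m).1 * c =
      ∑ j, m j * (dotR u (expVec (a j)) - c) := by
    intro m
    have : expVec (wt16 a m).2 = ∑ j, (m j : ℝ) • expVec (a j) := by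
      ext i
      simp [wt16, expVec, Finsupp.finset_sum_apply]
    rw [this]
    have h2 : ∀ s : Finset (Fin r), dotR u (∑ j ∈ s, (m j : ℝ) • expVec (a j)) =
        ∑ j ∈ s, m j * dotR u (expVec (a j)) := by
      intro s
      induction s using Finset.induction_on with
      | empty => simp [dotR]
      | insert x s hx ih =>
        rw [Finset.sum_insert hx, Finset.sum_insert hx, dotR_add16, dotR_smul16, ih]
    rw [h2]
    simp [wt16, mul_sub, Finset.sum_sub_distrib, Finset.sum_mul]
  have e1 : ∑ j, (m' j : ℝ) * (dotR u (expVec (a j)) - c) = 0 := by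
    rw [← hd, ← hw, hd]
    refine Finset.sum_eq_zero fun j _ => ?_
    by_cases hj : m j = 0
    · simp [hj]
    · rw [(hm j hj).2]; simp
  rw [Finset.sum_eq_zero_iff_of_nonneg] at e1
  · intro j hj
    refine ⟨ha j, ?_⟩
    have := e1 j (Finset.mem_univ j)
    rcases mul_eq_zero.1 this with h | h
    · exact absurd (by exact_mod_cast h) hj
    · linarith
  · intro j _
    exact mul_nonneg (Nat.cast_nonneg _) (sub_nonneg.2 (h1 _ (ha j)))

lemma inter_face16 {n : ℕ} {C F G : Set (Fin n → ℝ)} (hF : IsCompactFace C F)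
    (hG : IsCompactFace C G) (hne : (F ∩ G).Nonempty) : IsCompactFace C (F ∩ G) := by
  refine ⟨?_, hF.2.inter hG.2⟩
  obtain ⟨⟨u, c, hu, ⟨h1, -⟩, rfl, h3⟩, -⟩ := hF
  obtain ⟨⟨u', c', hu', ⟨h1', -⟩, rfl, h3'⟩, -⟩ := hG
  obtain ⟨v, ⟨hv, hv1⟩, ⟨-, hv2⟩⟩ := hne
  refine ⟨u + u', c + c', ?_, ⟨?_, v, hv, ?_⟩, ?_, ?_⟩
  · intro h0
    apply h3
    ext w
    refine ⟨fun h => h.1, fun hw => ⟨hw, ?_⟩⟩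
    have e1 := h1 w hw
    have e2 := h1' w hw
    have e3 := dotR_add_left16 u u' w
    have e4 := dotR_add_left16 u u' v
    rw [h0] at e3 e4
    simp only [dotR, Pi.zero_apply, zero_mul, Finset.sum_const_zero] at *
    linarith
  · intro w hw
    rw [dotR_add_left16]
    linarith [h1 w hw, h1' w hw]
  · rw [dotR_add_left16]; linarith
  · ext w
    simp only [Set.mem_inter_iff, Set.mem_setOf_eq, dotR_add_left16]
    constructor
    · rintro ⟨⟨h, e⟩, -, e'⟩
      exact ⟨h, by linarith⟩
    · rintro ⟨h, e⟩
      have e1 := h1 w h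
      have e2 := h1' w h
      exact ⟨⟨h, by linarith⟩, h, by linarith⟩
  · intro h
    apply h3
    refine Set.Subset.antisymm (fun x hx => hx.1) ?_
    intro x hx
    rw [← h] at hx
    exact hx.1

def face16 {n : ℕ} (C : Set (Fin n → ℝ)) (u : Fin n → ℝ) : Set (Fin n → ℝ) :=
  {v ∈ C | ∀ w ∈ C, dotR u v ≤ dotR u w}

section
variable {K : Type*} [Field K] {n r : ℕ} (a : Fin r → (Fin n →₀ ℕ))
    (J : Ideal (MvPolynomial (Fin n) K))
    (hJ : J = Ideal.span (Set.range fun i => monomial (a i) (1 : K)))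

lemma gen_mem16 (hJ : J = Ideal.span (Set.range fun i => monomial (a i) (1 : K))) (j) :
    expVec (a j) ∈ newtonPolyhedron J := by
  apply subset_convexHull
  exact ⟨a j, by rw [hJ]; exact Ideal.subset_span ⟨j, rfl⟩, rfl⟩

lemma exists_le16 (hJ : J = Ideal.span (Set.range fun i => monomial (a i) (1 : K)))
    (b : Fin n →₀ ℕ) (hb : monomial b (1 : K) ∈ J) : ∃ j, a j ≤ b := by
  have : (Set.range fun i => monomial (a i) (1 : K)) = (fun s => monomial s (1 : K)) ''
      (Set.range a) := by
    rw [← Set.range_comp]; rfl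
  rw [hJ, this, mem_ideal_span_monomial_image] at hb
  obtain ⟨s, ⟨j, rfl⟩, h⟩ := hb b (by simp [mem_support_iff])
  exact ⟨j, h⟩

lemma decomp16 (hJ : J = Ideal.span (Set.range fun i => monomial (a i) (1 : K)))
    {v : Fin n → ℝ} (hv : v ∈ newtonPolyhedron J) :
    ∃ p ∈ convexHull ℝ (Set.range fun i => expVec (a i)), p ≤ v := by
  have : newtonPolyhedron J ⊆ convexHull ℝ (Set.range fun i => expVec (a i)) + Set.Ici 0 := by
    apply convexHull_min
    · rintro _ ⟨b, hb, rfl⟩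
      obtain ⟨j, hj⟩ := exists_le16 a J hJ b hb
      refine ⟨expVec (a j), subset_convexHull _ _ ⟨j, rfl⟩, expVec b - expVec (a j), ?_, by simp⟩
      intro i
      simp only [Pi.zero_apply, Pi.sub_apply, expVec, sub_nonneg, Nat.cast_le]
      exact hj i
    · exact (convex_convexHull ℝ _).add (convex_Ici 0)
  obtain ⟨p, hp, q, hq, rfl⟩ := this hv
  refine ⟨p, hp, ?_⟩
  intro i
  have := hq i
  simp at this ⊢
  exact this

lemma add_single16 {v : Fin n → ℝ} (hv : v ∈ newtonPolyhedron J) (i : Fin n) (k : ℕ) :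
    v + Pi.single i (k : ℝ) ∈ newtonPolyhedron J := by
  have : newtonPolyhedron J ⊆ (fun v => v + Pi.single i (k : ℝ)) ⁻¹' newtonPolyhedron J := by
    apply convexHull_min
    · rintro _ ⟨b, hb, rfl⟩
      apply subset_convexHull
      refine ⟨b + Finsupp.single i k, ?_, ?_⟩
      · have := J.mul_mem_right (monomial (Finsupp.single i k) (1 : K)) hb
        rwa [monomial_mul, one_mul] at this
      · ext l
        simp only [expVec, Pi.add_apply, Finsupp.add_apply, Nat.cast_add, add_right_inj]
        by_cases h : l = i
        · subst h; simp
        · simp [h]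
    · exact (convex_convexHull ℝ _).translate_preimage_left _
  exact this hv

lemma dotR_single16 (u : Fin n → ℝ) (i : Fin n) (k : ℝ) : dotR u (Pi.single i k) = u i * k := by
  simp [dotR, Pi.single_apply]

lemma pos_of_compact16 {F : Set (Fin n → ℝ)} (hF : IsCompactFace (newtonPolyhedron J) F) :
    ∃ u : Fin n → ℝ, (∀ i, 0 < u i) ∧ F = face16 (newtonPolyhedron J) u := by
  obtain ⟨⟨u, c, hu, ⟨h1, v, hv, hvc⟩, hFe, h3⟩, hc⟩ := hF
  refine ⟨u, fun i => ?_, ?_⟩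
  · have hb : ∀ k : ℕ, c ≤ c + u i * k := by
      intro k
      have := h1 _ (add_single16 J hv i k)
      rwa [dotR_add16, dotR_single16, hvc] at this
    have h0 : 0 ≤ u i := by simpa using hb 1
    refine lt_of_le_of_ne h0 fun h => ?_
    have hmem : ∀ k : ℕ, v + Pi.single i (k : ℝ) ∈ F := by
      intro k
      rw [hFe]
      refine ⟨add_single16 J hv i k, ?_⟩
      rw [dotR_add16, dotR_single16, hvc, ← h]; simp
    obtain ⟨B, hB⟩ := (hc.image (continuous_apply i)).bddAbove
    obtain ⟨k, hk⟩ := exists_nat_gt (B - v i)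
    have := hB ⟨_, hmem k, rfl⟩
    simp at this
    linarith
  · rw [hFe]
    ext w
    constructor
    · rintro ⟨hw, e⟩
      exact ⟨hw, fun x hx => e ▸ h1 x hx⟩
    · rintro ⟨hw, e⟩
      exact ⟨hw, le_antisymm (hvc ▸ e v hv) (h1 w hw)⟩

lemma dotR_mono16 {u v w : Fin n → ℝ} (hu : ∀ i, 0 < u i) (h : v ≤ w) : dotR u v ≤ dotR u w :=
  Finset.sum_le_sum fun i _ => mul_le_mul_of_nonneg_left (h i) (hu i).le

lemma min16 (hJ : J = Ideal.span (Set.range fun i => monomial (a i) (1 : K)))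
    {u : Fin n → ℝ} (hu : ∀ i, 0 < u i) {c : ℝ}
    (hc : ∀ j, c ≤ dotR u (expVec (a j))) {v} (hv : v ∈ newtonPolyhedron J) : c ≤ dotR u v := by
  obtain ⟨p, hp, hpv⟩ := decomp16 a J hJ hv
  refine le_trans ?_ (dotR_mono16 hu hpv)
  have : convexHull ℝ (Set.range fun i => expVec (a i)) ⊆ {p | c ≤ dotR u p} := by
    apply convexHull_min
    · rintro _ ⟨j, rfl⟩
      exact hc j
    · refine convex_halfSpace_ge (f := dotR u) ⟨dotR_add16 u, fun c v => ?_⟩ c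
      exact dotR_smul16 u v c
  exact this hp

lemma mem_face16 (hJ : J = Ideal.span (Set.range fun i => monomial (a i) (1 : K)))
    {u : Fin n → ℝ} (hu : ∀ i, 0 < u i) {j}
    (hj : ∀ l, dotR u (expVec (a j)) ≤ dotR u (expVec (a l))) :
    expVec (a j) ∈ face16 (newtonPolyhedron J) u :=
  ⟨gen_mem16 a J hJ j, fun _ hw => min16 a J hJ hu hj hw⟩

lemma face_compact16 [Nonempty (Fin n)] [Nonempty (Fin r)]
    (hJ : J = Ideal.span (Set.range fun i => monomial (a i) (1 : K)))
    {u : Fin n → ℝ} (hu : ∀ i, 0 < u i) :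
    IsCompactFace (newtonPolyhedron J) (face16 (newtonPolyhedron J) u) := by
  obtain ⟨j, hj⟩ := Finite.exists_min fun j => dotR u (expVec (a j))
  obtain ⟨i⟩ := ‹Nonempty (Fin n)›
  have hm := mem_face16 a J hJ hu hj
  have heq : face16 (newtonPolyhedron J) u =
      {v ∈ newtonPolyhedron J | dotR u v = dotR u (expVec (a j))} := by
    ext w
    constructor
    · rintro ⟨hw, e⟩
      exact ⟨hw, le_antisymm (e _ hm.1) (hm.2 w hw)⟩
    · rintro ⟨hw, e⟩
      exact ⟨hw, fun x hx => e ▸ hm.2 x hx⟩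
  refine ⟨⟨u, dotR u (expVec (a j)), fun h => (hu i).ne' (congrFun h i), ⟨hm.2, _, hm.1, rfl⟩,
    heq, ?_⟩, ?_⟩
  · intro h
    have h2 := add_single16 J hm.1 i 1
    rw [← h] at h2
    have := h2.2 _ hm.1
    rw [dotR_add16, dotR_single16] at this
    have := hu i
    norm_num at *
    linarith
  · have : face16 (newtonPolyhedron J) u = convexHull ℝ (Set.range fun i => expVec (a i)) ∩
        {v | dotR u v = dotR u (expVec (a j))} := by
      rw [heq]
      ext v
      constructor
      · rintro ⟨hv, e⟩
        refine ⟨?_, e⟩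
        obtain ⟨p, hp, hpv⟩ := decomp16 a J hJ hv
        have hpC : p ∈ newtonPolyhedron J := by
          refine convexHull_min ?_ (convex_convexHull ℝ _) hp
          rintro _ ⟨j, rfl⟩
          exact gen_mem16 a J hJ j
        have e1 := hm.2 p hpC
        have e2 : ∑ i, u i * (v i - p i) = dotR u v - dotR u p := by
          simp [dotR, mul_sub, Finset.sum_sub_distrib]
        have e3 : ∀ i ∈ Finset.univ, 0 ≤ u i * (v i - p i) :=
          fun i _ => mul_nonneg (hu i).le (sub_nonneg.2 (hpv i))
        have e4 : ∑ i, u i * (v i - p i) = 0 :=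
          le_antisymm (by linarith) (Finset.sum_nonneg e3)
        rw [Finset.sum_eq_zero_iff_of_nonneg e3] at e4
        have : v = p := by
          ext i
          rcases mul_eq_zero.1 (e4 i (Finset.mem_univ i)) with h | h
          · exact absurd h (hu i).ne'
          · linarith
        rwa [this]
      · rintro ⟨hp, e⟩
        refine ⟨?_, e⟩
        refine convexHull_min ?_ (convex_convexHull ℝ _) hp
        rintro _ ⟨j, rfl⟩
        exact gen_mem16 a J hJ j
    rw [this]
    refine ((Set.finite_range fun i => expVec (a i)).isCompact_convexHull (𝕜 := ℝ)).inter_right ?_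
    refine isClosed_eq ?_ continuous_const
    unfold dotR
    fun_prop

lemma conn16 (hJ : J = Ideal.span (Set.range fun i => monomial (a i) (1 : K)))
    {α : Type*} (f : Set (Fin n → ℝ) → α)
    (hf : ∀ F G, IsCompactFace (newtonPolyhedron J) F → IsCompactFace (newtonPolyhedron J) G →
      (F ∩ G).Nonempty → f F = f G)
    {F G} (hF : IsCompactFace (newtonPolyhedron J) F) (hG : IsCompactFace (newtonPolyhedron J) G) :
    f F = f G := by
  have hn : Nonempty (Fin n) := by
    obtain ⟨⟨u, c, hu, -⟩, -⟩ := hF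
    by_contra h
    rw [not_nonempty_iff] at h
    exact hu (Subsingleton.elim _ _)
  have hr : Nonempty (Fin r) := by
    obtain ⟨⟨u, c, -, ⟨-, v, hv, -⟩, -⟩, -⟩ := hF
    obtain ⟨p, hp, -⟩ := decomp16 a J hJ hv
    by_contra h
    rw [not_nonempty_iff] at h
    rw [Set.range_eq_empty, convexHull_empty] at hp
    exact hp
  obtain ⟨u, hu, rfl⟩ := pos_of_compact16 J hF
  obtain ⟨u', hu', rfl⟩ := pos_of_compact16 J hG
  have hconv : Convex ℝ {u : Fin n → ℝ | ∀ i, 0 < u i} := by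
    have : {u : Fin n → ℝ | ∀ i, 0 < u i} = Set.pi Set.univ fun _ => Set.Ioi (0 : ℝ) := by
      ext; simp
    rw [this]
    exact convex_pi fun _ _ => convex_Ioi 0
  refine hconv.isPreconnected.induction₂ (fun u u' => f (face16 (newtonPolyhedron J) u) =
    f (face16 (newtonPolyhedron J) u')) ?_ ?_ ?_ hu hu'
  · intro x hx
    obtain ⟨j, hj⟩ := Finite.exists_min fun j => dotR x (expVec (a j))
    have hev : ∀ᶠ y in nhdsWithin x {u : Fin n → ℝ | ∀ i, 0 < u i}, ∀ l,
        dotR x (expVec (a j)) < dotR x (expVec (a l)) →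
        dotR y (expVec (a j)) < dotR y (expVec (a l)) := by
      rw [Filter.eventually_all]
      intro l
      by_cases h : dotR x (expVec (a j)) < dotR x (expVec (a l))
      · have hcont : ∀ l, Continuous fun y => dotR y (expVec (a l)) := by
          intro l; unfold dotR; fun_prop
        filter_upwards [nhdsWithin_le_nhds
          ((isOpen_lt (hcont j) (hcont l)).mem_nhds h)] with y hy _
        exact hy
      · exact Filter.Eventually.of_forall fun y hy => absurd hy h
    filter_upwards [hev, self_mem_nhdsWithin] with y hy hypos
    obtain ⟨l, hl⟩ := Finite.exists_min fun j => dotR y (expVec (a j))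
    have hlx : ∀ k, dotR x (expVec (a l)) ≤ dotR x (expVec (a k)) := by
      intro k
      by_contra hcon
      push Not at hcon
      have := hy l (lt_of_le_of_lt (hj k) hcon)
      exact absurd (hl j) (not_le.2 this)
    exact hf _ _ (face_compact16 a J hJ hx) (face_compact16 a J hJ hypos)
      ⟨_, mem_face16 a J hJ hx hlx, mem_face16 a J hJ hypos hl⟩
  · intro x y z _ _ _ h h'
    exact h.trans h'
  · intro x y _ _ h
    exact h.symm

lemma cf_inter16 (hJ : J = Ideal.span (Set.range fun i => monomial (a i) (1 : K)))
    (g : Set (Fin n → ℝ) → MvPolynomial (Fin r) K)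
    (hcomp : ∀ F G, IsCompactFace (newtonPolyhedron J) F →
        IsCompactFace (newtonPolyhedron J) G → G ⊆ F →
        piF (K := K) a G (g F) = piF (K := K) a G (g G))
    {F G} (hF : IsCompactFace (newtonPolyhedron J) F) (hG : IsCompactFace (newtonPolyhedron J) G)
    (hne : (F ∩ G).Nonempty) {m} (hmF : on16 a F m) (hmG : on16 a G m) :
    cf16 a F (wt16 a m) (g F) = cf16 a G (wt16 a m) (g G) := by
  have hH := inter_face16 hF hG hne
  have main : ∀ F', IsCompactFace (newtonPolyhedron J) F' → on16 a F' m → F ∩ G ⊆ F' →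
      cf16 a F' (wt16 a m) (g F') = cf16 a (F ∩ G) (wt16 a m) (g (F ∩ G)) := by
    intro F' hF' hm' hsub
    have : cf16 a (F ∩ G) (wt16 a m) (g F') = cf16 a (F ∩ G) (wt16 a m) (g (F ∩ G)) := by
      unfold cf16
      rw [hcomp F' (F ∩ G) hF' hH hsub]
    rw [← this, cf_eq16, cf_eq16]
    refine Finset.sum_congr rfl fun m' _ => ?_
    congr 1
    rw [eq_iff_iff, and_congr_left_iff]
    intro hw
    have hmH : on16 a (F ∩ G) m := fun j hj => ⟨hmF j hj, hmG j hj⟩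
    exact ⟨fun _ => on_of_wt16 a (gen_mem16 a J hJ) hH.1 hmH hw.symm,
      fun _ => on_of_wt16 a (gen_mem16 a J hJ) hF'.1 hm' hw.symm⟩
  rw [main F hF hmF Set.inter_subset_left, main G hG hmG Set.inter_subset_right]

lemma cf_pair16 (hJ : J = Ideal.span (Set.range fun i => monomial (a i) (1 : K)))
    (g : Set (Fin n → ℝ) → MvPolynomial (Fin r) K)
    (hcomp : ∀ F G, IsCompactFace (newtonPolyhedron J) F →
        IsCompactFace (newtonPolyhedron J) G → G ⊆ F →
        piF (K := K) a G (g F) = piF (K := K) a G (g G))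
    {F G} (hF : IsCompactFace (newtonPolyhedron J) F) (hG : IsCompactFace (newtonPolyhedron J) G)
    {m} (hmF : on16 a F m) (hmG : on16 a G m) :
    cf16 a F (wt16 a m) (g F) = cf16 a G (wt16 a m) (g G) := by
  by_cases h : m = 0
  · subst h
    have h0 : ∀ F, on16 a F 0 := fun F j hj => absurd rfl hj
    exact conn16 a J hJ (fun F => cf16 a F (wt16 a 0) (g F))
      (fun F G hF hG hne => cf_inter16 a J hJ g hcomp hF hG hne (h0 F) (h0 G)) hF hG
  · obtain ⟨j, hj⟩ := Finsupp.ne_iff.1 h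
    exact cf_inter16 a J hJ g hcomp hF hG ⟨_, hmF j hj, hmG j hj⟩ hmF hmG

end

theorem stmt16 {K : Type*} [Field K] {n r : ℕ} (a : Fin r → (Fin n →₀ ℕ))
    (J : Ideal (MvPolynomial (Fin n) K))
    (hJ : J = Ideal.span (Set.range fun i => monomial (a i) (1 : K)))
    (hext : Set.extremePoints ℝ (newtonPolyhedron J) = Set.range fun i => expVec (a i))
    (g : Set (Fin n → ℝ) → MvPolynomial (Fin r) K)
    (hcomp : ∀ F G, IsCompactFace (newtonPolyhedron J) F →
        IsCompactFace (newtonPolyhedron J) G → G ⊆ F →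
        piF (K := K) a G (g F) = piF (K := K) a G (g G)) :
    ∃ h : MvPolynomial (Fin r) K, ∀ F, IsCompactFace (newtonPolyhedron J) F →
      piF (K := K) a F h = piF (K := K) a F (g F) := by
  have hq : ∀ w : ℕ × (Fin n →₀ ℕ), ∃ q : K, ∀ F m, IsCompactFace (newtonPolyhedron J) F →
      on16 a F m → wt16 a m = w → cf16 a F w (g F) = q := by
    intro w
    by_cases h : ∃ F m, IsCompactFace (newtonPolyhedron J) F ∧ on16 a F m ∧ wt16 a m = w
    · obtain ⟨F, m, hF, hm, rfl⟩ := h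
      refine ⟨cf16 a F (wt16 a m) (g F), fun F' m' hF' hm' hw => ?_⟩
      exact cf_pair16 a J hJ g hcomp hF' hF
        (on_of_wt16 a (gen_mem16 a J hJ) hF'.1 hm' hw) hm
    · exact ⟨0, fun F m h1 h2 h3 => absurd ⟨F, m, h1, h2, h3⟩ h⟩
  choose q hq using hq
  have hrep : ∀ I : Set (Fin r), ∃ F, (∃ F', IsCompactFace (newtonPolyhedron J) F' ∧
      I = {j | expVec (a j) ∈ F'}) → IsCompactFace (newtonPolyhedron J) F ∧
      I = {j | expVec (a j) ∈ F} := by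
    intro I
    by_cases h : ∃ F', IsCompactFace (newtonPolyhedron J) F' ∧ I = {j | expVec (a j) ∈ F'}
    · obtain ⟨F, hF⟩ := h
      exact ⟨F, fun _ => hF⟩
    · exact ⟨∅, fun h' => absurd h' h⟩
  choose rep hrep using hrep
  have hs : ∀ w : ℕ × (Fin n →₀ ℕ), ∃ m, (∃ m', wt16 a m' = w) → wt16 a m = w := by
    intro w
    by_cases h : ∃ m', wt16 a m' = w
    · obtain ⟨m, hm⟩ := h
      exact ⟨m, fun _ => hm⟩
    · exact ⟨0, fun h' => absurd h' h⟩
  choose σ hσ using hs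
  let M : Finset (ℕ × (Fin n →₀ ℕ)) :=
    (Finset.univ : Finset (Set (Fin r))).biUnion fun I => (g (rep I)).support.image (wt16 a)
  have hM : ∀ w ∈ M, wt16 a (σ w) = w := by
    intro w hw
    simp only [M, Finset.mem_biUnion, Finset.mem_image] at hw
    obtain ⟨I, -, m, -, hm⟩ := hw
    exact hσ w ⟨m, hm⟩
  refine ⟨∑ w ∈ M, monomial (σ w) (q w), fun F hF => ?_⟩
  have key : ∀ w, cf16 a F w (∑ w ∈ M, monomial (σ w) (q w)) = cf16 a F w (g F) := by
    intro w
    rw [cf_sum16]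
    simp only [cf_monomial16]
    have e1 : ∑ w' ∈ M, (if on16 a F (σ w') ∧ wt16 a (σ w') = w then q w' else 0) =
        ∑ w' ∈ M, if w' = w then (if on16 a F (σ w) then q w else 0) else 0 := by
      refine Finset.sum_congr rfl fun w' hw' => ?_
      rw [hM w' hw']
      by_cases h : w' = w
      · subst h; simp
      · simp [h]
    rw [e1, Finset.sum_ite_eq']
    by_cases hex : ∃ m, on16 a F m ∧ wt16 a m = w
    · obtain ⟨m, hm, hw⟩ := hex
      have hon : on16 a F (σ w) :=
        on_of_wt16 a (gen_mem16 a J hJ) hF.1 hm (hw.trans (hσ w ⟨m, hw⟩).symm)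
      rw [if_pos hon, hq w F m hF hm hw]
      by_cases hwM : w ∈ M
      · rw [if_pos hwM]
      · rw [if_neg hwM]
        obtain ⟨hR, hRe⟩ := hrep {j | expVec (a j) ∈ F} ⟨F, hF, rfl⟩
        have hmR : on16 a (rep {j | expVec (a j) ∈ F}) m := by
          intro j hj
          have : j ∈ {j | expVec (a j) ∈ F} := hm j hj
          rw [hRe] at this
          exact this
        rw [← hq w _ m hR hmR hw, cf_eq16]
        symm
        refine Finset.sum_eq_zero fun m' hm' => if_neg ?_
        rintro ⟨-, h⟩
        apply hwM
        simp only [M, Finset.mem_biUnion, Finset.mem_image]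
        exact ⟨_, Finset.mem_univ _, m', hm', h⟩
    · have : cf16 a F w (g F) = 0 := by
        rw [cf_eq16]
        exact Finset.sum_eq_zero fun m _ => if_neg fun h => hex ⟨m, h⟩
      rw [this]
      by_cases hwM : w ∈ M
      · rw [if_pos hwM, if_neg fun h => hex ⟨_, h, hM w hwM⟩]
      · rw [if_neg hwM]
  refine Polynomial.ext fun d => MvPolynomial.ext _ _ fun b => ?_
  exact key (d, b)
end
end
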